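/- arXiv:2405.09236 — 6 statements merged into one kernel-verified Lean document; each statement's English description precedes it below -/
import Mathlib

section
/- Let 𝐀, 𝐗, 𝐘 be nonempty forests of finite rooted trees. Then 𝐀·𝐗 = 𝐀·𝐘 if and only if 𝐗|_{depth(𝐀)} = 𝐘|_{depth(𝐀)}. -/
noncomputable section

/-- A rooted tree (finite or infinite), presented by its levels: `level n` is the
set of vertices of depth `n` (finitely many at each depth), every vertex of depth
`n+1` has a parent of depth `n` (edges are directed towards the root), and there
is a unique vertex of depth `0`, the root. -/
structure RTree : Type 1 where
  level : ℕ → Type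
  parent : ∀ n, level (n + 1) → level n
  fin : ∀ n, Fintype (level n)
  root : level 0
  root_unique : ∀ x : level 0, x = root

namespace RTree

/-- Isomorphism of rooted trees: a depth-preserving bijection of the vertices
commuting with the parent maps (hence root- and edge-preserving). -/
def Iso (t s : RTree) : Prop :=
  ∃ e : ∀ n, t.level n ≃ s.level n,
    ∀ (n : ℕ) (x : t.level (n + 1)), e n (t.parent n x) = s.parent n (e (n + 1) x)

/-- The (layer-by-layer direct) product of two rooted trees. -/
def tprod (t s : RTree) : RTree where
  level n := t.level n × s.level n
  parent n x := (t.parent n x.1, s.parent n x.2)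
  fin n := by haveI := t.fin n; haveI := s.fin n; infer_instance
  root := (t.root, s.root)
  root_unique x := by
    obtain ⟨a, b⟩ := x
    rw [t.root_unique a, s.root_unique b]

/-- The cut of a tree at depth `n`: the subtree induced on vertices of depth `≤ n`. -/
def tcut (t : RTree) (n : ℕ) : RTree where
  level k := PLift (k ≤ n) × t.level k
  parent k x := (⟨Nat.le_of_succ_le x.1.down⟩, t.parent k x.2)
  fin k := by
    haveI := t.fin k
    haveI : Finite (PLift (k ≤ n)) := Finite.of_subsingleton
    exact Fintype.ofFinite _
  root := (⟨Nat.zero_le n⟩, t.root)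
  root_unique x := by
    obtain ⟨a, b⟩ := x
    rw [t.root_unique b]

/-- A tree is finite when it has no vertices below some depth. -/
def IsFinite (t : RTree) : Prop := ∃ N, ∀ k, N ≤ k → IsEmpty (t.level k)

/-- The depth of a (finite) tree: the largest depth of one of its vertices. -/
def depth (t : RTree) : ℕ := sSup {n | Nonempty (t.level n)}

/-- `tpow t k` is the `k`-fold product `t^k` of the tree `t` with itself (for `k ≥ 1`). -/
def tpow (t : RTree) : ℕ → RTree
  | 0 => t
  | 1 => t
  | n + 2 => tprod t (tpow t (n + 1))

/-- Iterated parent map, sending a vertex of depth `k+1` to its ancestor of depth 1. -/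
def down (t : RTree) : ∀ k, t.level (k + 1) → t.level 1
  | 0, x => x
  | k + 1, x => t.down k (t.parent (k + 1) x)

/-- The subtree of `t` rooted at the depth-1 vertex `v` (a child of the root). -/
def subtreeAt (t : RTree) (v : t.level 1) : RTree where
  level k := { x : t.level (k + 1) // t.down k x = v }
  parent k x := ⟨t.parent (k + 1) x.1, x.2⟩
  fin k := by haveI := t.fin (k + 1); exact Fintype.ofFinite _
  root := ⟨v, rfl⟩
  root_unique x := Subtype.ext x.2

/-- `D t`: the forest (here, a list) of the subtrees of `t` rooted at the
children of the root. -/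
def D (t : RTree) : List RTree := (@Finset.univ _ (t.fin 1)).toList.map t.subtreeAt

end RTree

/-- A forest is a finite multiset of rooted trees; we represent it by a list of
(concrete) trees, equality of forests being `ForestEq` below. -/
abbrev Forest := List RTree

/-- Equality of forests as multisets of isomorphism classes of rooted trees. -/
def ForestEq (F G : Forest) : Prop := Multiset.Rel RTree.Iso (↑F) (↑G)

/-- `F` is a sub-multiset of `G` up to isomorphism of rooted trees. -/
def ForestLe (F G : Forest) : Prop :=
  ∃ H : Multiset RTree, H ≤ (↑G : Multiset RTree) ∧ Multiset.Rel RTree.Iso (↑F) H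

/-- The product of two forests: the multiset of pairwise products. -/
def fprod (F G : Forest) : Forest := (F.map fun t => G.map fun s => t.tprod s).flatten

/-- The cut of a forest at depth `n`. -/
def fcut (F : Forest) (n : ℕ) : Forest := F.map (RTree.tcut · n)

/-- The depth of a forest: maximum of the depths of its trees. -/
def fdepth (F : Forest) : ℕ := (F.map RTree.depth).foldr max 0

/-- `fpow F k` is the `k`-fold product `F^k` of the forest `F` with itself (for `k ≥ 1`). -/
def fpow (F : Forest) : ℕ → Forest
  | 0 => F
  | 1 => F
  | n + 2 => fprod F (fpow F (n + 1))

/-- `D` of a forest: the multiset union of the `D` of its trees. -/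
def fD (F : Forest) : Forest := (F.map RTree.D).flatten

/-- `R F`: the rooted tree obtained by attaching each tree of the forest `F`
as a child subtree of a new common root, so that `D (R F) = F`. -/
def rollRoot (F : Forest) : RTree where
  level k :=
    match k with
    | 0 => PUnit
    | k + 1 => Σ i : Fin F.length, (F.get i).level k
  parent k :=
    match k with
    | 0 => fun _ => PUnit.unit
    | k + 1 => fun x => ⟨x.1, (F.get x.1).parent k x.2⟩
  fin k := by
    match k with
    | 0 => exact inferInstanceAs (Fintype PUnit)
    | k + 1 =>
      haveI : ∀ i : Fin F.length, Fintype ((F.get i).level k) := fun i => (F.get i).fin k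
      exact inferInstanceAs (Fintype (Σ i : Fin F.length, (F.get i).level k))
  root := PUnit.unit
  root_unique _ := rfl

/-- The number of vertices of depth `d` in a forest. -/
def levelCard (F : Forest) (d : ℕ) : ℕ := (F.map fun t => @Fintype.card _ (t.fin d)).sum

/-- The total number of vertices of a (finite) forest. -/
def totalCard (F : Forest) : ℕ := ∑ d ∈ Finset.range (fdepth F + 1), levelCard F d

/-- A finite discrete-time dynamical system: a finite set of states together
with a transition function. -/
structure FDDS : Type 1 where
  S : Type
  fin : Fintype S
  f : S → S

namespace FDDS

/-- A state is periodic when some positive iterate of the transition function fixes it. -/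
def Periodic (A : FDDS) (u : A.S) : Prop := ∃ p, 1 ≤ p ∧ A.f^[p] u = u

/-- The least `k` such that `f^[k] s` is periodic. -/
def depthOf (A : FDDS) (s : A.S) : ℕ := sInf {k | A.Periodic (A.f^[k] s)}

/-- The depth of an FDDS: the maximum over states `s` of the least `k` such
that `f^[k] s` is periodic. -/
def depth (A : FDDS) : ℕ := sSup {d | ∃ s : A.S, d = A.depthOf s}

/-- The functional digraph of `A` has a single (weakly) connected component. -/
def Connected (A : FDDS) : Prop := ∀ s s' : A.S, ∃ k l, A.f^[k] s = A.f^[l] s'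

/-- The unroll tree of `A` in the state `u`: vertices of depth `k` are the
`k`-th preimages of `u`, the parent of `(v,k+1)` being `(f v, k)`. -/
def unrollTree (A : FDDS) (u : A.S) : RTree where
  level k := { s : A.S // A.f^[k] s = u }
  parent k x := ⟨A.f x.1, by rw [← Function.iterate_succ_apply]; exact x.2⟩
  fin k := by haveI := A.fin; exact Fintype.ofFinite _
  root := ⟨u, rfl⟩
  root_unique x := Subtype.ext x.2

/-- The unroll of `A`: the multiset of the unroll trees of `A` in its periodic states. -/
def unroll (A : FDDS) : Forest :=
  haveI := A.fin
  letI : DecidablePred A.Periodic := Classical.decPred _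
  (Finset.univ.filter A.Periodic).toList.map A.unrollTree

/-- The minimal period of a periodic state. -/
def minPeriod (A : FDDS) (u : A.S) : ℕ := sInf {p | 1 ≤ p ∧ A.f^[p] u = u}

/-- The periodic state `w` with `f^[i] w = u`: the `i`-th "shift" of `u`
backwards along its cycle. -/
def shiftState (A : FDDS) (u : A.S) (i : ℕ) : A.S := A.f^[i * (A.minPeriod u - 1)] u

/-- The shift `σ^i(t)` of the unroll tree `t = unrollTree A u`: the unroll tree
rooted at the depth-`i` vertex of the infinite branch of `t`. -/
def shiftTree (A : FDDS) (u : A.S) (i : ℕ) : RTree := A.unrollTree (A.shiftState u i)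

/-- The unroll tree of `A` in `u` admits a periodic pattern of size `p ≥ 1`,
i.e. `σ^p(t_u) = t_u`. -/
def PatternSize (A : FDDS) (u : A.S) (p : ℕ) : Prop :=
  1 ≤ p ∧ RTree.Iso (A.shiftTree u p) (A.unrollTree u)

/-- `|Shift(t_u)|`: the smallest size of a periodic pattern of the unroll tree of `A` in `u`. -/
def shiftCount (A : FDDS) (u : A.S) : ℕ := sInf {p | A.PatternSize u p}

end FDDS

/-- A rooted tree is an unroll tree when it is isomorphic to the unroll tree of
some FDDS in one of its periodic states. -/
def IsUnrollTree (x : RTree) : Prop :=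
  ∃ (A : FDDS) (u : A.S), A.Periodic u ∧ RTree.Iso x (A.unrollTree u)

end

namespace RTree

noncomputable section

/-- Test forests: `TestT d` are the generators at depth `d`. -/
def TestT : ℕ → Type
  | 0 => Empty
  | d + 1 => FreeMonoid (TestT d)

/-- The children of a vertex. -/
def kids (t : RTree) (n : ℕ) (v : t.level n) : Finset (t.level (n + 1)) :=
  letI := t.fin (n + 1)
  letI : DecidablePred (fun w => t.parent n w = v) := Classical.decPred _
  Finset.univ.filter (fun w => t.parent n w = v)

lemma mem_kids {t : RTree} {n : ℕ} {v : t.level n} {w : t.level (n + 1)} :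
    w ∈ t.kids n v ↔ t.parent n w = v := by
  simp [kids]

/-- The character counting homomorphisms from test trees of depth at most `d` to the
subtree below `v`. -/
def chr (t : RTree) : ∀ (d n : ℕ), t.level n → (FreeMonoid (TestT d) →* ℚ)
  | 0, _, _ => 1
  | d + 1, n, v => FreeMonoid.lift
      (fun f : FreeMonoid (TestT d) => ∑ w ∈ t.kids n v, chr t d (n + 1) w f)

lemma chr_zero (t : RTree) (n : ℕ) (v : t.level n) : t.chr 0 n v = 1 := rfl

lemma chr_succ_of (t : RTree) (d n : ℕ) (v : t.level n) (f : FreeMonoid (TestT d)) :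
    t.chr (d + 1) n v (FreeMonoid.of (α := TestT (d + 1)) f) =
      ∑ w ∈ t.kids n v, t.chr d (n + 1) w f := by
  rw [chr]; exact FreeMonoid.lift_eval_of _ _

lemma chr_nonneg (t : RTree) (d : ℕ) : ∀ (n : ℕ) (v : t.level n) (f : FreeMonoid (TestT d)),
    0 ≤ t.chr d n v f := by
  induction d with
  | zero => intro n v f; simp [chr_zero]
  | succ d ih =>
    intro n v f
    induction f using FreeMonoid.inductionOn' with
    | one => simp
    | of_mul x xs h =>
      rw [map_mul]
      refine mul_nonneg ?_ h
      rw [chr_succ_of t d n v x]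
      exact Finset.sum_nonneg fun w _ => ih _ _ _

/-- existence of a downward path of length `d` from `v`. -/
def HasPath (t : RTree) : ∀ (d n : ℕ), t.level n → Prop
  | 0, _, _ => True
  | d + 1, n, v => ∃ w, t.parent n w = v ∧ HasPath t d (n + 1) w

lemma chr_pos (t : RTree) (d : ℕ) : ∀ (n : ℕ) (v : t.level n) (_ : t.HasPath d n v)
    (f : FreeMonoid (TestT d)), 0 < t.chr d n v f := by
  induction d with
  | zero => intro n v _ f; simp [chr_zero]
  | succ d ih =>
    rintro n v ⟨w, hw, hp⟩ f
    induction f using FreeMonoid.inductionOn' with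
    | one => simp
    | of_mul x xs h =>
      rw [map_mul]
      refine mul_pos ?_ h
      rw [chr_succ_of t d n v x]
      exact Finset.sum_pos' (fun w _ => chr_nonneg _ _ _ _ _) ⟨w, mem_kids.2 hw, ih _ _ hp _⟩

lemma hasPath_of_level (t : RTree) (d : ℕ) (x : t.level d) : t.HasPath d 0 t.root := by
  have key : ∀ n k (y : t.level n), t.HasPath k n y → t.HasPath (n + k) 0 t.root := by
    intro n
    induction n with
    | zero => intro k y h; rw [t.root_unique y] at h; simpa using h
    | succ n ih =>
      intro k y h
      have := ih (k + 1) (t.parent n y) ⟨y, rfl, h⟩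
      rwa [show n + 1 + k = n + (k + 1) by ring]
  exact key d 0 x trivial

/-- pairing in the product tree -/
def pmk {t s : RTree} {n : ℕ} (v : t.level n) (w : s.level n) : (t.tprod s).level n := (v, w)

lemma sum_kids_tprod (t s : RTree) (n : ℕ) (v : t.level n) (w : s.level n)
    (F : (t.tprod s).level (n + 1) → ℚ) :
    ∑ p ∈ (t.tprod s).kids n (pmk v w), F p = ∑ a ∈ t.kids n v, ∑ b ∈ s.kids n w, F (pmk a b) := by
  rw [← Finset.sum_product' (t.kids n v) (s.kids n w) (fun a b => F (pmk a b))]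
  have hm : ∀ (a : t.level (n + 1)) (b : s.level (n + 1)),
      (t.tprod s).parent n (pmk a b) = pmk v w ↔ t.parent n a = v ∧ s.parent n b = w :=
    fun a b => Prod.ext_iff
  symm
  refine Finset.sum_bij (fun p _ => pmk p.1 p.2) ?_ ?_ ?_ ?_
  · rintro ⟨a, b⟩ h
    rw [Finset.mem_product, mem_kids, mem_kids] at h
    exact mem_kids.2 ((hm a b).2 h)
  · rintro ⟨a, b⟩ _ ⟨a', b'⟩ _ h
    exact h
  · rintro ⟨a, b⟩ h
    refine ⟨(a, b), ?_, rfl⟩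
    rw [Finset.mem_product, mem_kids, mem_kids]
    exact (hm a b).1 (mem_kids.1 h)
  · intro _ _; rfl

lemma chr_tprod (t s : RTree) (d : ℕ) : ∀ (n : ℕ) (v : t.level n) (w : s.level n)
    (f : FreeMonoid (TestT d)),
    (t.tprod s).chr d n (pmk v w) f = t.chr d n v f * s.chr d n w f := by
  induction d with
  | zero => intro n v w f; simp [chr_zero]
  | succ d ih =>
    intro n v w f
    induction f using FreeMonoid.inductionOn' with
    | one => simp
    | of_mul x xs h =>
      rw [map_mul, map_mul, map_mul, h, chr_succ_of _ d n _ x, chr_succ_of _ d n _ x,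
        chr_succ_of _ d n _ x, sum_kids_tprod]
      rw [Finset.sum_congr rfl fun a _ => Finset.sum_congr rfl fun b _ => ih (n + 1) a b x]
      rw [← Finset.sum_mul_sum]
      ring

lemma chr_iso {t s : RTree} (e : ∀ n, t.level n ≃ s.level n)
    (he : ∀ (n : ℕ) (x : t.level (n + 1)), e n (t.parent n x) = s.parent n (e (n + 1) x))
    (d : ℕ) : ∀ (n : ℕ) (v : t.level n), t.chr d n v = s.chr d n (e n v) := by
  induction d with
  | zero => intro n v; rfl
  | succ d ih =>
    intro n v
    apply FreeMonoid.hom_eq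
    intro x
    rw [chr_succ_of _ d n _ x, chr_succ_of _ d n _ x]
    refine Finset.sum_bij (fun a _ => e (n + 1) a) ?_ ?_ ?_ ?_
    · intro a ha
      rw [mem_kids] at ha ⊢
      rw [← he, ha]
    · intro a _ b _ h; exact (e _).injective h
    · intro b hb
      rw [mem_kids] at hb
      refine ⟨(e (n + 1)).symm b, ?_, by simp⟩
      rw [mem_kids]
      apply (e n).injective
      rw [he]; simpa using hb
    · intro a _; rw [ih]

lemma chr_root_iso {t s : RTree} (h : Iso t s) (d : ℕ) :
    t.chr d 0 t.root = s.chr d 0 s.root := by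
  obtain ⟨e, he⟩ := h
  rw [chr_iso e he, s.root_unique (e 0 t.root)]

/-- Dedekind independence of characters for multisets. -/
lemma multiset_chars_eq {G : Type} [Monoid G] (M N : Multiset (G →* ℚ))
    (h : ∀ g, (M.map (fun χ => χ g)).sum = (N.map (fun χ => χ g)).sum) : M = N := by
  classical
  have li := linearIndependent_monoidHom G ℚ
  have key : ∀ (S : Multiset (G →* ℚ)) (U : Finset (G →* ℚ)), S.toFinset ⊆ U → ∀ g,
      (S.map (fun χ => χ g)).sum = ∑ χ ∈ U, (S.count χ : ℚ) * χ g := by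
    intro S U hU g
    rw [Finset.sum_multiset_map_count]
    simp only [nsmul_eq_mul]
    apply Finset.sum_subset hU
    intro x _ hx
    have : S.count x = 0 := by simpa using hx
    simp [this]
  rw [linearIndependent_iff'] at li
  have hz := li (M.toFinset ∪ N.toFinset) (fun χ => (M.count χ : ℚ) - N.count χ) (by
    ext g
    have := h g
    rw [key M (M.toFinset ∪ N.toFinset) Finset.subset_union_left,
      key N (M.toFinset ∪ N.toFinset) Finset.subset_union_right] at this
    simp [sub_mul, this, Finset.sum_apply])
  ext χ
  by_cases hχ : χ ∈ M.toFinset ∪ N.toFinset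
  · have := hz χ hχ
    exact_mod_cast sub_eq_zero.1 this
  · simp only [Finset.mem_union, Multiset.mem_toFinset, not_or] at hχ
    rw [Multiset.count_eq_zero.2 hχ.1, Multiset.count_eq_zero.2 hχ.2]

lemma exists_equiv_of_map_eq {α β γ : Type} (s : Finset α) (u : Finset β) (f : α → γ) (g : β → γ)
    (h : s.val.map f = u.val.map g) : ∃ e : s ≃ u, ∀ a : s, f a = g (e a) := by
  classical
  have hc : ∀ c : γ, Nonempty ({a : s // f a = c} ≃ {b : u // g b = c}) := by
    intro c
    have h2 := congrArg (Multiset.count c) h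
    rw [Multiset.count_map, Multiset.count_map] at h2
    refine ⟨Fintype.equivOfCardEq ?_⟩
    have e1 : Fintype.card {a : s // f a = c} = (s.filter (fun a => c = f a)).card := by
      rw [Fintype.card_subtype, ← Finset.card_map (Function.Embedding.subtype _)]
      congr 1
      ext a; simp [eq_comm, and_comm]
    have e2 : Fintype.card {a : u // g a = c} = (u.filter (fun a => c = g a)).card := by
      rw [Fintype.card_subtype, ← Finset.card_map (Function.Embedding.subtype _)]
      congr 1
      ext a; simp [eq_comm, and_comm]
    rw [e1, e2]
    exact h2
  have E := fun c => (hc c).some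
  refine ⟨(Equiv.sigmaFiberEquiv (fun a : s => f a)).symm.trans
    ((Equiv.sigmaCongrRight E).trans (Equiv.sigmaFiberEquiv (fun b : u => g b))), ?_⟩
  intro a
  exact (E (f a) ⟨a, rfl⟩).2.symm

lemma kids_match {t s : RTree} {d n : ℕ} {v : t.level n} {w : s.level n}
    (h : t.chr (d + 1) n v = s.chr (d + 1) n w) :
    ∃ e : t.kids n v ≃ s.kids n w, ∀ a : t.kids n v, t.chr d (n + 1) a = s.chr d (n + 1) (e a) := by
  apply exists_equiv_of_map_eq (t.kids n v) (s.kids n w) (t.chr d (n + 1)) (s.chr d (n + 1))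
  apply multiset_chars_eq
  intro g
  have := DFunLike.congr_fun h (FreeMonoid.of (α := TestT (d + 1)) g)
  rw [chr_succ_of, chr_succ_of] at this
  rw [Multiset.map_map, Multiset.map_map]
  exact this

lemma step {t s : RTree} (d n : ℕ) (e : t.level n ≃ s.level n)
    (he : ∀ v, t.chr (d + 1) n v = s.chr (d + 1) n (e v)) :
    ∃ e' : t.level (n + 1) ≃ s.level (n + 1),
      (∀ v, t.chr d (n + 1) v = s.chr d (n + 1) (e' v)) ∧
      ∀ x, e (t.parent n x) = s.parent n (e' x) := by
  choose E hE using fun v => kids_match (he v)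
  let F : ∀ v, {x // t.parent n x = v} ≃ {y // s.parent n y = e v} := fun v =>
    (Equiv.subtypeEquivRight (fun x => mem_kids.symm)).trans
      ((E v).trans (Equiv.subtypeEquivRight (fun x => mem_kids)))
  refine ⟨(Equiv.sigmaFiberEquiv (t.parent n)).symm.trans
    ((Equiv.sigmaCongr e F).trans (Equiv.sigmaFiberEquiv (s.parent n))), ?_, ?_⟩
  · intro v
    exact hE (t.parent n v) ⟨v, mem_kids.2 rfl⟩
  · intro x
    exact (F (t.parent n x) ⟨x, rfl⟩).2.symm

lemma iso_cut_of_chr {t s : RTree} (d : ℕ) (h : t.chr d 0 t.root = s.chr d 0 s.root) :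
    Iso (t.tcut d) (s.tcut d) := by
  have hs : ∀ n (hn : n + 1 ≤ d) (e : {e : t.level n ≃ s.level n //
      ∀ v, t.chr (d - n) n v = s.chr (d - n) n (e v)}),
      ∃ e' : {e : t.level (n + 1) ≃ s.level (n + 1) //
        ∀ v, t.chr (d - (n + 1)) (n + 1) v = s.chr (d - (n + 1)) (n + 1) (e v)},
      ∀ x, e.1 (t.parent n x) = s.parent n (e'.1 x) := by
    rintro n hn ⟨e, he⟩
    have hd : d - n = d - (n + 1) + 1 := by omega
    rw [hd] at he
    obtain ⟨e', h1, h2⟩ := step _ n e he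
    exact ⟨⟨e', h1⟩, h2⟩
  choose S hS using hs
  let E0 : {e : t.level 0 ≃ s.level 0 // ∀ v, t.chr (d - 0) 0 v = s.chr (d - 0) 0 (e v)} :=
    ⟨⟨fun _ => s.root, fun _ => t.root, fun x => (t.root_unique x).symm,
      fun x => (s.root_unique x).symm⟩, fun v => by
        rw [t.root_unique v]; exact h⟩
  let E : ∀ n, n ≤ d → {e : t.level n ≃ s.level n //
      ∀ v, t.chr (d - n) n v = s.chr (d - n) n (e v)} := fun n =>
    Nat.rec (motive := fun n => n ≤ d → {e : t.level n ≃ s.level n //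
      ∀ v, t.chr (d - n) n v = s.chr (d - n) n (e v)}) (fun _ => E0)
      (fun n ih hn => S n hn (ih (Nat.le_of_succ_le hn))) n
  refine ⟨fun n => ⟨fun x => (x.1, (E n x.1.down).1 x.2), fun x => (x.1, (E n x.1.down).1.symm x.2),
    fun x => ?_, fun x => ?_⟩, ?_⟩
  · exact Prod.ext rfl ((E n x.1.down).1.symm_apply_apply x.2)
  · exact Prod.ext rfl ((E n x.1.down).1.apply_symm_apply x.2)
  · rintro n ⟨⟨hn⟩, x⟩
    exact Prod.ext rfl (hS n hn (E n (Nat.le_of_succ_le hn)) x)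

lemma Iso.refl (t : RTree) : Iso t t := ⟨fun _ => Equiv.refl _, fun _ _ => rfl⟩

lemma Iso.symm {t s : RTree} (h : Iso t s) : Iso s t := by
  obtain ⟨e, he⟩ := h
  refine ⟨fun n => (e n).symm, fun n x => ?_⟩
  apply (e n).injective
  rw [he]; simp

lemma Iso.trans {t s u : RTree} (h : Iso t s) (h' : Iso s u) : Iso t u := by
  obtain ⟨e, he⟩ := h
  obtain ⟨f, hf⟩ := h'
  exact ⟨fun n => (e n).trans (f n), fun n x => by simp [he, hf]⟩

lemma Iso.tprod_right (a : RTree) {t s : RTree} (h : Iso t s) : Iso (a.tprod t) (a.tprod s) := by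
  obtain ⟨e, he⟩ := h
  exact ⟨fun n => Equiv.prodCongr (Equiv.refl _) (e n), fun n x => Prod.ext rfl (he n x.2)⟩

lemma iso_tprod_tcut (a x : RTree) (d : ℕ) (h : ∀ k, Nonempty (a.level k) → k ≤ d) :
    Iso (a.tprod x) (a.tprod (x.tcut d)) :=
  ⟨fun n => ⟨fun y => (y.1, (⟨h n ⟨y.1⟩⟩, y.2)), fun y => (y.1, y.2.2),
    fun _ => rfl, fun _ => rfl⟩, fun _ _ => rfl⟩

lemma level_le_depth {a : RTree} (ha : a.IsFinite) {k : ℕ} (hk : Nonempty (a.level k)) :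
    k ≤ a.depth := by
  obtain ⟨N, hN⟩ := ha
  refine le_csSup ⟨N, ?_⟩ hk
  rintro m ⟨y⟩
  by_contra hc
  exact (hN m (by omega)).false y

lemma level_depth {a : RTree} (ha : a.IsFinite) : Nonempty (a.level a.depth) := by
  obtain ⟨N, hN⟩ := ha
  refine Nat.sSup_mem (s := {n | Nonempty (a.level n)}) ⟨0, ⟨a.root⟩⟩ ⟨N, ?_⟩
  rintro m ⟨y⟩
  by_contra hc
  exact (hN m (by omega)).false y

lemma depth_le_fdepth (A : Forest) : ∀ a ∈ A, a.depth ≤ fdepth A := by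
  induction A with
  | nil => simp
  | cons b A ih =>
    intro a ha
    have : fdepth (b :: A) = max b.depth (fdepth A) := rfl
    rw [this]
    rcases List.mem_cons.1 ha with rfl | h
    · exact le_max_left _ _
    · exact (ih a h).trans (le_max_right _ _)

lemma exists_depth_eq (A : Forest) (hA : A ≠ []) : ∃ a ∈ A, a.depth = fdepth A := by
  induction A with
  | nil => exact absurd rfl hA
  | cons b A ih =>
    have h1 : fdepth (b :: A) = max b.depth (fdepth A) := rfl
    rw [h1]
    by_cases hn : A = []
    · subst hn
      exact ⟨b, by simp, by simp [fdepth]⟩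
    · obtain ⟨a, ha, h⟩ := ih hn
      rcases le_total b.depth (fdepth A) with hl | hl
      · exact ⟨a, List.mem_cons_of_mem _ ha, by rw [max_eq_right hl, h]⟩
      · exact ⟨b, by simp, by rw [max_eq_left hl]⟩

/-- The sum of the characters of the trees of a forest. -/
def fchr (d : ℕ) (F : Forest) (f : FreeMonoid (TestT d)) : ℚ :=
  (F.map (fun t => t.chr d 0 t.root f)).sum

lemma fchr_congr {F G : Forest} (h : ForestEq F G) (d : ℕ) (f : FreeMonoid (TestT d)) :
    fchr d F f = fchr d G f := by
  have h2 : Multiset.Rel (· = ·) ((F : Multiset RTree).map (fun t => t.chr d 0 t.root f))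
      ((G : Multiset RTree).map (fun t => t.chr d 0 t.root f)) := by
    rw [Multiset.rel_map]
    exact h.mono fun a _ b _ hab => by rw [chr_root_iso hab]
  rw [Multiset.rel_eq] at h2
  have := congrArg Multiset.sum h2
  simpa [fchr] using this

lemma fchr_fprod (F G : Forest) (d : ℕ) (f : FreeMonoid (TestT d)) :
    fchr d (fprod F G) f = fchr d F f * fchr d G f := by
  induction F with
  | nil => simp [fchr, fprod]
  | cons a F ih =>
    have h1 : fprod (a :: F) G = G.map (fun s => a.tprod s) ++ fprod F G := rfl
    have h2 : ∀ P Q : Forest, fchr d (P ++ Q) f = fchr d P f + fchr d Q f := by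
      intro P Q; simp [fchr]
    have h3 : fchr d (a :: F) f = a.chr d 0 a.root f + fchr d F f := by simp [fchr]
    rw [h1, h2, h3, ih, add_mul]
    congr 1
    unfold fchr
    rw [List.map_map, ← List.sum_map_mul_left]
    congr 1
    apply List.map_congr_left
    intro s _
    exact chr_tprod a s d 0 a.root s.root f

lemma fchr_pos (A : Forest) (hA : ∀ t ∈ A, t.IsFinite) (hAne : A ≠ [])
    (f : FreeMonoid (TestT (fdepth A))) : 0 < fchr (fdepth A) A f := by
  obtain ⟨a, ha, h⟩ := exists_depth_eq A hAne
  obtain ⟨x⟩ := level_depth (hA a ha)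
  rw [h] at x
  have hp := chr_pos a _ 0 a.root (hasPath_of_level a _ x) f
  refine lt_of_lt_of_le hp ?_
  unfold fchr
  apply List.single_le_sum
  · intro y hy
    obtain ⟨t, _, rfl⟩ := List.mem_map.1 hy
    exact chr_nonneg _ _ _ _ _
  · exact List.mem_map.2 ⟨a, ha, rfl⟩

lemma forestEq_iff_forall {X Y : Forest} (d : ℕ)
    (h : ∀ f, fchr d X f = fchr d Y f) : ForestEq (fcut X d) (fcut Y d) := by
  have hm : (X : Multiset RTree).map (fun t => t.chr d 0 t.root) =
      (Y : Multiset RTree).map (fun t => t.chr d 0 t.root) := by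
    apply multiset_chars_eq
    intro g
    rw [Multiset.map_map, Multiset.map_map]
    simpa [fchr] using h g
  rw [← Multiset.rel_eq, Multiset.rel_map] at hm
  have : Multiset.Rel Iso ((X : Multiset RTree).map (fun t => t.tcut d))
      ((Y : Multiset RTree).map (fun t => t.tcut d)) := by
    rw [Multiset.rel_map]
    exact hm.mono fun a _ b _ hab => iso_cut_of_chr d hab
  simpa [ForestEq, fcut] using this

lemma fprod_eq_of_cut {d : ℕ} {X Y : Forest} (h : ForestEq (fcut X d) (fcut Y d)) (A : Forest)
    (hA : ∀ a ∈ A, ∀ k, Nonempty (a.level k) → k ≤ d) :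
    ForestEq (fprod A X) (fprod A Y) := by
  induction A with
  | nil => exact Multiset.Rel.zero
  | cons a A ih =>
    have h1 : ∀ G, ((fprod (a :: A) G : Forest) : Multiset RTree) =
      (G : Multiset RTree).map (fun s => a.tprod s) + ((fprod A G : Forest) : Multiset RTree) := by
      intro G; rfl
    unfold ForestEq
    rw [h1, h1]
    refine Multiset.Rel.add ?_ (ih fun b hb => hA b (List.mem_cons_of_mem _ hb))
    have h' : Multiset.Rel Iso ((X : Multiset RTree).map (fun t => t.tcut d))
      ((Y : Multiset RTree).map (fun t => t.tcut d)) := h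
    rw [Multiset.rel_map] at h' ⊢
    have ha := hA a (by simp)
    exact h'.mono fun x _ y _ hxy => (iso_tprod_tcut a x d ha).trans
      ((Iso.tprod_right a hxy).trans (iso_tprod_tcut a y d ha).symm)

end

end RTree

/-- Let `𝐀, 𝐗, 𝐘` be nonempty forests of finite rooted trees.
Then `𝐀·𝐗 = 𝐀·𝐘` if and only if `𝐗|_{depth 𝐀} = 𝐘|_{depth 𝐀}`. -/
theorem stmt1 (A X Y : Forest)
    (hA : ∀ t ∈ A, t.IsFinite) (hX : ∀ t ∈ X, t.IsFinite) (hY : ∀ t ∈ Y, t.IsFinite)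
    (hAne : A ≠ []) (hXne : X ≠ []) (hYne : Y ≠ []) :
    ForestEq (fprod A X) (fprod A Y) ↔ ForestEq (fcut X (fdepth A)) (fcut Y (fdepth A)) := by
  constructor
  · intro h
    apply RTree.forestEq_iff_forall
    intro f
    have := RTree.fchr_congr h (fdepth A) f
    rw [RTree.fchr_fprod, RTree.fchr_fprod] at this
    exact mul_left_cancel₀ (RTree.fchr_pos A hA hAne f).ne' this
  · intro h
    exact RTree.fprod_eq_of_cut h A fun a ha k hk =>
      (RTree.level_le_depth (hA a ha) hk).trans (RTree.depth_le_fdepth A a ha)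
end

section
/- Let A, X, B be FDDS, let α be the number of unroll trees of 𝒰(B) (i.e., the number of periodic states of B), and let n ≥ 2α + depth(B). Then 𝒰(A)·𝒰(X) = 𝒰(B) if and only if 𝒰(A)|_n · 𝒰(X)|_n = 𝒰(B)|_n. -/
noncomputable section

noncomputable section
namespace UPf

/-- Types of trees cut at depth `k`. -/
def TT : ℕ → Type
  | 0 => Unit
  | k + 1 => Multiset (TT k)

def pre (A : FDDS) (s : A.S) : Finset A.S := by
  classical
  haveI := A.fin
  exact Finset.univ.filter (fun v => A.f v = s)

theorem mem_pre {A : FDDS} {s v : A.S} : v ∈ pre A s ↔ A.f v = s := by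
  simp [pre]

def tau (A : FDDS) : ∀ k, A.S → TT k
  | 0, _ => ()
  | k + 1, s => ((pre A s).val.map (tau A k) : Multiset (TT k))

theorem tau_succ (A : FDDS) (k : ℕ) (s : A.S) :
    tau A (k + 1) s = ((pre A s).val.map (tau A k) : Multiset (TT k)) := rfl

def alive : ∀ (j k : ℕ), TT k → Prop
  | 0, _, _ => True
  | _ + 1, 0, _ => False
  | j + 1, k + 1, x => ∃ y ∈ (show Multiset (TT k) from x), alive j k y

def ext : ∀ (k m : ℕ), TT k → TT m
  | _, 0, _ => ()
  | 0, _ + 1, _ => (0 : Multiset _)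
  | k + 1, m + 1, x => (Multiset.map (ext k m) (show Multiset (TT k) from x) : Multiset (TT m))

theorem alive_tau (A : FDDS) : ∀ (j k : ℕ), j ≤ k → ∀ s : A.S,
    (alive j k (tau A k s) ↔ ∃ v, A.f^[j] v = s) := by
  intro j
  induction j with
  | zero => intro k _ s; simp [alive]
  | succ j ih =>
    intro k hk s
    obtain ⟨k, rfl⟩ : ∃ k', k = k' + 1 := ⟨k - 1, by omega⟩
    have : alive (j + 1) (k + 1) (tau A (k + 1) s) ↔
        ∃ y ∈ (pre A s).val.map (tau A k), alive j k y := Iff.rfl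
    rw [this]
    constructor
    · rintro ⟨y, hy, hal⟩
      obtain ⟨v, hv, rfl⟩ := Multiset.mem_map.1 hy
      obtain ⟨w, hw⟩ := (ih k (by omega) v).1 hal
      refine ⟨w, ?_⟩
      rw [Function.iterate_succ_apply', hw]
      exact mem_pre.1 hv
    · rintro ⟨w, hw⟩
      rw [Function.iterate_succ_apply'] at hw
      exact ⟨_, Multiset.mem_map_of_mem _ (mem_pre.2 hw), (ih k (by omega) _).2 ⟨w, rfl⟩⟩

theorem ext_tau (A : FDDS) : ∀ (k m : ℕ) (s : A.S), (m ≤ k ∨ ¬ ∃ v, A.f^[k] v = s) →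
    ext k m (tau A k s) = tau A m s := by
  intro k
  induction k with
  | zero =>
    intro m s h
    rcases h with h | h
    · obtain rfl : m = 0 := by omega
      rfl
    · exact absurd ⟨s, rfl⟩ h
  | succ k ih =>
    intro m s h
    cases m with
    | zero => rfl
    | succ m =>
      change Multiset.map (ext k m) ((pre A s).val.map (tau A k)) = (pre A s).val.map (tau A m)
      rw [Multiset.map_map]
      apply Multiset.map_congr rfl
      intro v hv
      apply ih
      rcases h with h | h
      · left; omega
      · right
        rintro ⟨w, hw⟩
        apply h
        refine ⟨w, ?_⟩
        rw [Function.iterate_succ_apply', hw]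
        exact mem_pre.1 hv

open Classical in
def np (A : FDDS) (k : ℕ) (s : A.S) : Multiset (TT k) :=
  ((pre A s).filter (fun v => ¬ A.Periodic v)).val.map (tau A k)

theorem periodic_iff {A : FDDS} {u : A.S} : A.Periodic u ↔ u ∈ Function.periodicPts A.f := Iff.rfl

theorem periodic_f {A : FDDS} {u : A.S} (h : A.Periodic u) : A.Periodic (A.f u) :=
  (Function.bijOn_periodicPts A.f).mapsTo h

theorem periodic_iter {A : FDDS} {u : A.S} (h : A.Periodic u) (k : ℕ) :
    A.Periodic (A.f^[k] u) := by
  induction k with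
  | zero => exact h
  | succ k ih => rw [Function.iterate_succ_apply']; exact periodic_f ih

theorem periodic_inj {A : FDDS} {u v : A.S} (hu : A.Periodic u) (hv : A.Periodic v)
    (h : A.f u = A.f v) : u = v :=
  (Function.bijOn_periodicPts A.f).injOn hu hv h

theorem pre_eq {A : FDDS} {s c : A.S} (hc : A.Periodic c) (h : A.f c = s) (k : ℕ) :
    tau A (k + 1) s = (tau A k c ::ₘ np A k s : Multiset (TT k)) := by
  classical
  have h1 : (pre A s).filter (fun v => A.Periodic v) = {c} := by
    ext v
    simp only [Finset.mem_filter, mem_pre, Finset.mem_singleton]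
    constructor
    · rintro ⟨h1, h2⟩
      exact periodic_inj h2 hc (h1.trans h.symm)
    · rintro rfl
      exact ⟨h, hc⟩
  have h2 : (pre A s).val = (pre A s).val.filter (fun v => A.Periodic v) +
      (pre A s).val.filter (fun v => ¬ A.Periodic v) := (Multiset.filter_add_not _ _).symm
  rw [tau_succ, h2, Multiset.map_add, ← Finset.filter_val, h1]
  simp only [Finset.singleton_val, Multiset.map_singleton, Multiset.singleton_add, np,
    Finset.filter_val]
  congr!

/-- depth bound -/
def DB (A : FDDS) (D : ℕ) : Prop := ∀ s, ¬ A.Periodic s → ¬ ∃ v, A.f^[D] v = s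

theorem periodic_surj {A : FDDS} {u : A.S} (h : A.Periodic u) (k : ℕ) : ∃ v, A.f^[k] v = u := by
  induction k generalizing u with
  | zero => exact ⟨u, rfl⟩
  | succ k ih =>
    obtain ⟨w, hw, rfl⟩ := (Function.bijOn_periodicPts A.f).surjOn h
    obtain ⟨v, hv⟩ := ih hw
    exact ⟨v, by rw [Function.iterate_succ_apply', hv]⟩

theorem filter_tau {A : FDDS} {D k : ℕ} (hk : D ≤ k) (hD : DB A D) {s c : A.S}
    (hc : A.Periodic c) (h : A.f c = s) [DecidablePred (alive D k)] :
    (show Multiset (TT k) from tau A (k + 1) s).filter (alive D k) = {tau A k c} ∧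
    (show Multiset (TT k) from tau A (k + 1) s).filter (fun x => ¬ alive D k x) = np A k s := by
  rw [pre_eq hc h]
  have h1 : alive D k (tau A k c) := (alive_tau A D k hk c).2 (periodic_surj hc D)
  have h2 : ∀ x ∈ np A k s, ¬ alive D k x := by
    intro x hx
    obtain ⟨v, hv, rfl⟩ := Multiset.mem_map.1 hx
    rw [alive_tau A D k hk]
    exact hD v (by classical exact (Finset.mem_filter.1 hv).2)
  constructor
  · rw [Multiset.filter_cons_of_pos _ h1, Multiset.filter_eq_nil.2 h2]
    rfl
  · rw [Multiset.filter_cons_of_neg (p := fun x => ¬ alive D k x) _ (not_not.2 h1), Multiset.filter_eq_self.2 h2]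

theorem step {C B : FDDS} {D k : ℕ} (hk : D ≤ k) (hC : DB C D) (hB : DB B D)
    {s c : C.S} {s' c' : B.S} (hc : C.Periodic c) (h : C.f c = s) (hc' : B.Periodic c')
    (h' : B.f c' = s') (he : tau C (k + 1) s = tau B (k + 1) s') :
    tau C k c = tau B k c' ∧ ∀ m, np C m s = np B m s' := by
  classical
  obtain ⟨a1, a2⟩ := filter_tau hk hC hc h
  obtain ⟨b1, b2⟩ := filter_tau hk hB hc' h'
  rw [he] at a1 a2
  refine ⟨Multiset.singleton_inj.1 (a1.symm.trans b1), fun m => ?_⟩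
  have key : ∀ (A : FDDS), DB A D → ∀ s, (np A k s).map (ext k m) = np A m s := by
    intro A hA s
    unfold np
    rw [Multiset.map_map]
    apply Multiset.map_congr rfl
    intro v hv
    apply ext_tau
    right
    rintro ⟨w, hw⟩
    refine hA v (Finset.mem_filter.1 hv).2 ⟨A.f^[k - D] w, ?_⟩
    rw [← Function.iterate_add_apply]
    rw [← hw]; congr 2; omega
  rw [← key C hC, ← key B hB, ← a2, ← b2]

structure Back (A : FDDS) (u : ℕ → A.S) (p : ℕ) : Prop where
  f : ∀ k, A.f (u (k + 1)) = u k
  per : ∀ k, u (k + p) = u k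
  pos : 0 < p

theorem Back.periodic {A : FDDS} {u : ℕ → A.S} {p : ℕ} (h : Back A u p) (k : ℕ) :
    A.Periodic (u k) := by
  refine ⟨p, h.pos, ?_⟩
  have : ∀ j, A.f^[j] (u (k + j)) = u k := by
    intro j
    induction j with
    | zero => rfl
    | succ j ih => rw [Function.iterate_succ_apply, ← add_assoc, h.f, ih]
  have := this p
  rwa [h.per] at this

theorem main_tau {C B : FDDS} {D N p q : ℕ} (hC : DB C D) (hB : DB B D) {u : ℕ → C.S}
    {w : ℕ → B.S} (hu : Back C u p) (hw : Back B w q) (hN : p + q ≤ N)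
    (he : tau C (N + D) (u 0) = tau B (N + D) (w 0)) (m : ℕ) :
    tau C m (u 0) = tau B m (w 0) := by
  have h1 : ∀ i, i ≤ N → tau C (N - i + D) (u i) = tau B (N - i + D) (w i) := by
    intro i
    induction i with
    | zero => intro _; exact he
    | succ i ih =>
      intro hi
      have := ih (by omega)
      rw [show N - i + D = (N - (i + 1) + D) + 1 by omega] at this
      exact (step (by omega) hC hB (hu.periodic _) (hu.f i) (hw.periodic _) (hw.f i) this).1
  have h2 : ∀ i, i < N → ∀ m, np C m (u i) = np B m (w i) := by
    intro i hi
    have := h1 i hi.le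
    rw [show N - i + D = (N - (i + 1) + D) + 1 by omega] at this
    exact (step (by omega) hC hB (hu.periodic _) (hu.f i) (hw.periodic _) (hw.f i) this).2
  have h3 : ∀ i, ∀ m, np C m (u i) = np B m (w i) := by
    intro i
    induction i using Nat.strong_induction_on with
    | _ i ih =>
      intro m
      by_cases hi : i < N
      · exact h2 i hi m
      · have hp := hu.pos
        have hq := hw.pos
        obtain ⟨r, rfl⟩ : ∃ r, i = r + p + q := ⟨i - p - q, by omega⟩
        have e1 := ih (r + q) (by omega) m
        have e2 := ih r (by omega) m
        have e3 := ih (r + p) (by omega) m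
        rw [hw.per] at e1 ⊢
        rw [hu.per] at e3
        rw [show r + p + q = r + q + p by omega, hu.per, e1, ← e2, e3]
  have h4 : ∀ m i, tau C m (u i) = tau B m (w i) := by
    intro m
    induction m with
    | zero => intro i; rfl
    | succ m ih =>
      intro i
      rw [pre_eq (hu.periodic _) (hu.f i), pre_eq (hw.periodic _) (hw.f i), ih, h3]
  exact h4 m 0

theorem exists_back (A : FDDS) {c : A.S} (hc : A.Periodic c) (P : Finset A.S)
    (hP : ∀ v, A.Periodic v → v ∈ P) :
    ∃ u p, Back A u p ∧ u 0 = c ∧ p ≤ P.card := by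
  have hpos : 0 < Function.minimalPeriod A.f c := Function.minimalPeriod_pos_of_mem_periodicPts hc
  have hle : Function.minimalPeriod A.f c ≤ P.card := by
    rw [← Finset.card_range (Function.minimalPeriod A.f c)]
    apply Finset.card_le_card_of_injOn (fun k => A.f^[k] c)
    · intro k _
      exact hP _ (periodic_iter hc k)
    · have := Function.iterate_injOn_Iio_minimalPeriod (f := A.f) (x := c)
      intro a ha b hb hab
      exact this (by simpa using ha) (by simpa using hb) hab
  have hper : A.f^[Function.minimalPeriod A.f c] c = c :=
    Function.isPeriodicPt_minimalPeriod A.f c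
  generalize Function.minimalPeriod A.f c = p at *
  obtain ⟨p, rfl⟩ : ∃ p', p = p' + 1 := ⟨p - 1, by omega⟩
  refine ⟨fun k => A.f^[k * p] c, p + 1, ⟨?_, ?_, hpos⟩, by simp, hle⟩
  · intro k
    rw [← Function.iterate_succ_apply' A.f, show ((k + 1) * p).succ = k * p + (p + 1) by
      simp only [Nat.succ_eq_add_one]; ring, Function.iterate_add_apply, hper]
  · intro k
    rw [show (k + (p + 1)) * p = k * p + (p + 1) * p by ring, Function.iterate_add_apply]
    congr 1
    rw [Function.iterate_mul]
    exact Function.iterate_fixed hper p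

theorem exists_periodic (A : FDDS) (s : A.S) : ∃ k, A.Periodic (A.f^[k] s) := by
  have := A.fin
  obtain ⟨i, j, hij, h⟩ := Finite.exists_ne_map_eq_of_infinite (fun k : ℕ => A.f^[k] s)
  wlog hlt : i < j generalizing i j
  · exact this j i hij.symm h.symm (by omega)
  refine ⟨i, j - i, by omega, ?_⟩
  rw [← Function.iterate_add_apply]
  have h' : A.f^[i] s = A.f^[j] s := h
  rw [h']; congr 2; omega

theorem DB_depth (B : FDDS) : DB B B.depth := by
  rintro s hs ⟨v, rfl⟩
  apply hs
  have := B.fin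
  have h1 : B.depthOf v ≤ B.depth := by
    apply le_csSup
    · have : {d | ∃ s : B.S, d = B.depthOf s} = Set.range B.depthOf := by
        ext; simp [eq_comm]
      rw [this]
      exact (Set.finite_range _).bddAbove
    · exact ⟨v, rfl⟩
  have h2 : B.Periodic (B.f^[B.depthOf v] v) := Nat.sInf_mem (exists_periodic B v)
  rw [show B.depth = (B.depth - B.depthOf v) + B.depthOf v by omega, Function.iterate_add_apply]
  exact periodic_iter h2 _

theorem DB_transfer {C B : FDDS} {D n : ℕ} (hB : DB B D) (hn : D + 1 ≤ n)
    (h : ∀ c, C.Periodic c → ∃ b, B.Periodic b ∧ tau C n c = tau B n b) : DB C D := by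
  classical
  rintro s hs ⟨v, hv⟩
  have hex := exists_periodic C s
  set j := Nat.find hex with hj
  have hjs : C.Periodic (C.f^[j] s) := Nat.find_spec hex
  have hj0 : j ≠ 0 := by
    intro h0; rw [h0] at hjs; exact hs hjs
  obtain ⟨i, hi⟩ : ∃ i, j = i + 1 := ⟨j - 1, by omega⟩
  have hns : ¬ C.Periodic (C.f^[i] s) := Nat.find_min hex (by omega)
  rw [hi, Function.iterate_succ_apply'] at hjs
  obtain ⟨b, hb, he⟩ := h _ hjs
  obtain ⟨k, rfl⟩ : ∃ k, n = k + 1 := ⟨n - 1, by omega⟩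
  obtain ⟨c', hc', hcs⟩ := (Function.bijOn_periodicPts C.f).surjOn hjs
  obtain ⟨b', hb', hbs⟩ := (Function.bijOn_periodicPts B.f).surjOn hb
  have f1 := (filter_tau (k := k) (by omega) hB hb' hbs).1
  rw [← he, pre_eq hc' hcs, Multiset.filter_cons_of_pos _
    ((alive_tau C D k (by omega) c').2 (periodic_surj hc' D))] at f1
  have f2 : tau C k (C.f^[i] s) ∈ (np C k (C.f (C.f^[i] s))).filter (alive D k) := by
    rw [Multiset.mem_filter]
    constructor
    · apply Multiset.mem_map_of_mem
      exact Finset.mem_filter.2 ⟨mem_pre.2 rfl, hns⟩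
    · rw [alive_tau C D k (by omega)]
      refine ⟨C.f^[i] v, ?_⟩
      rw [← Function.iterate_add_apply, add_comm, Function.iterate_add_apply, hv]
  have := congrArg Multiset.card f1
  simp only [Multiset.card_cons, Multiset.card_singleton] at this
  have h0 : Multiset.card ((np C k (C.f (C.f^[i] s))).filter (alive D k)) = 0 := by omega
  rw [Multiset.card_eq_zero] at h0
  rw [h0] at f2
  exact absurd f2 (Multiset.notMem_zero _)

theorem iso_refl (t : RTree) : t.Iso t := ⟨fun _ => Equiv.refl _, fun _ _ => rfl⟩

theorem iso_symm {t s : RTree} (h : t.Iso s) : s.Iso t := by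
  obtain ⟨e, he⟩ := h
  refine ⟨fun n => (e n).symm, fun n x => ?_⟩
  rw [Equiv.symm_apply_eq, he, Equiv.apply_symm_apply]

theorem iso_trans {t s r : RTree} (h : t.Iso s) (h' : s.Iso r) : t.Iso r := by
  obtain ⟨e, he⟩ := h
  obtain ⟨e', he'⟩ := h'
  refine ⟨fun n => (e n).trans (e' n), fun n x => ?_⟩
  simp only [Equiv.trans_apply]
  rw [he, he']

theorem iso_cut {t s : RTree} (h : t.Iso s) (n : ℕ) : (t.tcut n).Iso (s.tcut n) := by
  obtain ⟨e, he⟩ := h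
  refine ⟨fun k => Equiv.prodCongr (Equiv.refl _) (e k), fun k x => ?_⟩
  exact Prod.ext rfl (he k x.2)

theorem prod_cut (t s : RTree) (n : ℕ) :
    ((t.tcut n).tprod (s.tcut n)).Iso ((t.tprod s).tcut n) := by
  refine ⟨fun k =>
    { toFun := fun x => (x.1.1, (x.1.2, x.2.2))
      invFun := fun y => ((y.1, y.2.1), (y.1, y.2.2))
      left_inv := fun x => ?_
      right_inv := fun y => ?_ }, fun k x => ?_⟩
  · obtain ⟨⟨⟨_⟩, _⟩, ⟨⟨_⟩, _⟩⟩ := x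
    rfl
  · rfl
  · rfl

/-- Direct product of two systems. -/
def sysProd (A X : FDDS) : FDDS where
  S := A.S × X.S
  fin := by haveI := A.fin; haveI := X.fin; infer_instance
  f := Prod.map A.f X.f

theorem sysProd_iter (A X : FDDS) (k : ℕ) (p : A.S × X.S) :
    (sysProd A X).f^[k] p = (A.f^[k] p.1, X.f^[k] p.2) := by
  change (Prod.map A.f X.f)^[k] p = _
  rw [Prod.map_iterate]
  rfl

theorem unroll_prod (A X : FDDS) (a : A.S) (x : X.S) :
    ((A.unrollTree a).tprod (X.unrollTree x)).Iso ((sysProd A X).unrollTree (a, x)) := by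
  refine ⟨fun k =>
    { toFun := fun y => ⟨(y.1.1, y.2.1), by
        rw [sysProd_iter]; exact Prod.ext y.1.2 y.2.2⟩
      invFun := fun z => (⟨z.1.1, by
        exact congrArg Prod.fst ((sysProd_iter A X k z.1).symm.trans z.2)⟩, ⟨z.1.2, by
        exact congrArg Prod.snd ((sysProd_iter A X k z.1).symm.trans z.2)⟩)
      left_inv := fun y => ?_
      right_inv := fun z => ?_ }, fun k y => ?_⟩
  · rfl
  · rfl
  · rfl

theorem periodic_prod {A X : FDDS} {a : A.S} {x : X.S} :
    (sysProd A X).Periodic (a, x) ↔ A.Periodic a ∧ X.Periodic x := by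
  constructor
  · rintro ⟨p, hp, h⟩
    rw [sysProd_iter] at h
    exact ⟨⟨p, hp, congrArg Prod.fst h⟩, ⟨p, hp, congrArg Prod.snd h⟩⟩
  · rintro ⟨⟨p, hp, h⟩, ⟨q, hq, h'⟩⟩
    refine ⟨p * q, Nat.mul_pos hp hq, ?_⟩
    rw [sysProd_iter]
    refine Prod.ext ?_ ?_
    · change A.f^[p * q] a = a
      rw [Function.iterate_mul]; exact Function.iterate_fixed h q
    · change X.f^[p * q] x = x
      rw [mul_comm, Function.iterate_mul]; exact Function.iterate_fixed h' p

theorem tau_of_cut_iso {C B : FDDS} {c : C.S} {b : B.S} {n : ℕ}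
    (h : ((C.unrollTree c).tcut n).Iso ((B.unrollTree b).tcut n)) :
    tau C n c = tau B n b := by
  obtain ⟨e, he⟩ := h
  have key : ∀ k l (hkl : k + l ≤ n) (s : {s : C.S // C.f^[l] s = c}),
      tau C k s.1 = tau B k (e l (⟨by omega⟩, s)).2.1 := by
    intro k
    induction k with
    | zero => intro l hl s; rfl
    | succ k ih =>
      intro l hl s
      rw [tau_succ, tau_succ]
      have hs1 : ∀ v, v ∈ (pre C s.1).val → C.f^[l + 1] v = c := by
        intro v hv
        rw [Function.iterate_succ_apply, mem_pre.1 hv]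
        exact s.2
      refine Multiset.map_eq_map_of_bij_of_nodup _ _ (pre C s.1).nodup (pre B _).nodup
        (fun v hv => (e (l + 1) (⟨by omega⟩, ⟨v, hs1 v hv⟩)).2.1) ?_ ?_ ?_ ?_
      · intro v hv
        apply mem_pre.2
        have := he l (⟨by omega⟩, ⟨v, hs1 v hv⟩)
        have h2 := congrArg (fun z => z.2.1) this
        refine Eq.trans h2.symm ?_
        have h3 : ((C.unrollTree c).tcut n).parent l (⟨by omega⟩, ⟨v, hs1 v hv⟩) =
          (⟨by omega⟩, s) := Prod.ext rfl (Subtype.ext (mem_pre.1 hv))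
        exact congrArg (fun z => (e l z).2.1) h3
      · intro v hv w hw hvw
        have h1 : e (l + 1) (⟨by omega⟩, ⟨v, hs1 v hv⟩) = e (l + 1) (⟨by omega⟩, ⟨w, hs1 w hw⟩) :=
          Prod.ext (Subsingleton.elim (α := PLift _) _ _) (Subtype.ext hvw)
        have h2 := (e (l + 1)).injective h1
        exact congrArg (fun z => z.2.1) h2
      · intro w hw
        have hw' := mem_pre.1 hw
        have hw1 : B.f^[l + 1] w = b := by
          rw [Function.iterate_succ_apply, hw']
          exact (e l (⟨by omega⟩, s)).2.2
        obtain ⟨z, hz⟩ := (e (l + 1)).surjective (⟨by omega⟩, ⟨w, hw1⟩)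
        have h1 := he l z
        have h2 : e l (((C.unrollTree c).tcut n).parent l z) = e l (⟨by omega⟩, s) := by
          rw [h1, hz]
          exact Prod.ext rfl (Subtype.ext hw')
        have h3 := (e l).injective h2
        refine ⟨z.2.1, mem_pre.2 (congrArg (fun z => z.2.1) h3), ?_⟩
        exact congrArg (fun z => z.2.1) hz
      · intro v hv
        exact ih (l + 1) (by omega) ⟨v, hs1 v hv⟩
  have h0 := key n 0 (by omega) ⟨c, rfl⟩
  rw [h0]
  congr 1
  exact (e 0 _).2.2

theorem iso_of_rel {t s : RTree} (R : ∀ n, t.level n → s.level n → Prop)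
    (h0 : R 0 t.root s.root)
    (hs : ∀ n y y', R n y y' → ∃ e : {x // t.parent n x = y} ≃ {x // s.parent n x = y'},
      ∀ x, R (n + 1) x.1 (e x).1) : t.Iso s := by
  choose e he using hs
  let st0 : ∀ n, {E : t.level n ≃ s.level n // ∀ x, R n x (E x)} →
      (t.level (n + 1) ≃ s.level (n + 1)) := fun n E =>
    (Equiv.sigmaFiberEquiv (t.parent n)).symm.trans
      ((Equiv.sigmaCongr E.1 (fun y => e n y (E.1 y) (E.2 y))).trans
        (Equiv.sigmaFiberEquiv (s.parent n)))
  let st : ∀ n, {E : t.level n ≃ s.level n // ∀ x, R n x (E x)} →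
      {E : t.level (n + 1) ≃ s.level (n + 1) // ∀ x, R (n + 1) x (E x)} := fun n E =>
    ⟨st0 n E, fun x => he n _ _ (E.2 (t.parent n x)) ⟨x, rfl⟩⟩
  let z : {E : t.level 0 ≃ s.level 0 // ∀ x, R 0 x (E x)} :=
    ⟨{ toFun := fun _ => s.root
       invFun := fun _ => t.root
       left_inv := fun x => (t.root_unique x).symm
       right_inv := fun x => (s.root_unique x).symm }, fun x => by
        rw [t.root_unique x]; exact h0⟩
  let EE : ∀ n, {E : t.level n ≃ s.level n // ∀ x, R n x (E x)} := fun n => Nat.rec z st n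
  refine ⟨fun n => (EE n).1, fun n x => ?_⟩
  exact (e n _ _ ((EE n).2 (t.parent n x)) ⟨x, rfl⟩).2.symm

theorem exists_equiv {α β γ : Type} (P : Finset α) (Q : Finset β) (f : α → γ) (g : β → γ)
    (h : P.val.map f = Q.val.map g) :
    ∃ e : {x // x ∈ P} ≃ {y // y ∈ Q}, ∀ x, f x.1 = g (e x).1 := by
  classical
  have key : ∀ c, Nonempty ({a : {x // x ∈ P} // f a.1 = c} ≃ {b : {y // y ∈ Q} // g b.1 = c}) := by
    intro c
    rw [← Fintype.card_eq]
    have h1 := congrArg (Multiset.count c) h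
    rw [Multiset.count_map, Multiset.count_map] at h1
    have aux : ∀ {α : Type} (P : Finset α) (f : α → γ),
        Fintype.card {a : {x // x ∈ P} // f a.1 = c} = (P.val.filter (fun a => c = f a)).card := by
      intro α P f
      rw [← Finset.filter_val, Finset.card_val, ← Fintype.card_coe]
      refine Fintype.card_congr
        { toFun := fun a => ⟨a.1.1, Finset.mem_filter.2 ⟨a.1.2, a.2.symm⟩⟩
          invFun := fun a => ⟨⟨a.1, (Finset.mem_filter.1 a.2).1⟩, (Finset.mem_filter.1 a.2).2.symm⟩
          left_inv := fun a => rfl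
          right_inv := fun a => rfl }
    rw [aux, aux, h1]
  refine ⟨Equiv.ofFiberEquiv (f := fun x : {x // x ∈ P} => f x.1)
    (g := fun x : {x // x ∈ Q} => g x.1) (fun c => (key c).some), fun x => ?_⟩
  exact (Equiv.ofFiberEquiv_map (f := fun x : {x // x ∈ P} => f x.1)
    (g := fun x : {x // x ∈ Q} => g x.1) (fun c => (key c).some) x).symm

theorem exists_bound (C B : FDDS) : ∃ M, ∀ (c : C.S) (b : B.S),
    tau C M c = tau B M b → ∀ m, tau C m c = tau B m b := by
  classical
  have := C.fin
  have := B.fin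
  have h : ∀ p : C.S × B.S, ∃ M, tau C M p.1 = tau B M p.2 → ∀ m, tau C m p.1 = tau B m p.2 := by
    intro p
    by_cases hp : ∀ m, tau C m p.1 = tau B m p.2
    · exact ⟨0, fun _ => hp⟩
    · push Not at hp
      obtain ⟨M, hM⟩ := hp
      exact ⟨M, fun h => absurd h hM⟩
  choose M hM using h
  refine ⟨Finset.univ.sup M, fun c b h => hM (c, b) ?_⟩
  have hle : M (c, b) ≤ Finset.univ.sup M := Finset.le_sup (Finset.mem_univ _)
  have := congrArg (ext _ (M (c, b))) h
  rwa [ext_tau C _ _ _ (Or.inl hle), ext_tau B _ _ _ (Or.inl hle)] at this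

/-- Children of a vertex of the unroll tree are the preimages of the state. -/
def childEquiv (A : FDDS) (u : A.S) (n : ℕ) (y : (A.unrollTree u).level n) :
    {x // (A.unrollTree u).parent n x = y} ≃ {v // v ∈ pre A y.1} where
  toFun x := ⟨x.1.1, mem_pre.2 (congrArg Subtype.val x.2)⟩
  invFun v := ⟨⟨v.1, by
    rw [Function.iterate_succ_apply, mem_pre.1 v.2]; exact y.2⟩, Subtype.ext (mem_pre.1 v.2)⟩
  left_inv _ := rfl
  right_inv _ := rfl

theorem iso_of_tau {C B : FDDS} {c : C.S} {b : B.S} (h : ∀ m, tau C m c = tau B m b) :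
    (C.unrollTree c).Iso (B.unrollTree b) := by
  obtain ⟨M, hM⟩ := exists_bound C B
  refine iso_of_rel (fun n x y => ∀ m, tau C m x.1 = tau B m y.1) h ?_
  intro n y y' hy
  obtain ⟨e, he⟩ := exists_equiv (pre C y.1) (pre B y'.1) (tau C M) (tau B M) (hy (M + 1))
  refine ⟨(childEquiv C c n y).trans (e.trans (childEquiv B b n y').symm), fun x => ?_⟩
  exact hM _ _ (he (childEquiv C c n y x))

open Classical in
def per (A : FDDS) : Finset A.S :=
  haveI := A.fin
  Finset.univ.filter A.Periodic

theorem mem_per {A : FDDS} {u : A.S} : u ∈ per A ↔ A.Periodic u := by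
  simp [per]

theorem unroll_eq (A : FDDS) : A.unroll = (per A).toList.map A.unrollTree := by
  unfold FDDS.unroll per
  congr!

theorem fprod_map {α β : Type} (L : List α) (M : List β) (t : α → RTree) (s : β → RTree) :
    fprod (L.map t) (M.map s) = (L ×ˢ M).map (fun p => (t p.1).tprod (s p.2)) := by
  induction L with
  | nil => rfl
  | cons a L ih =>
    rw [List.product_cons, List.map_append, ← ih]
    simp [fprod, Function.comp_def]

theorem pair_iff {A X B : FDDS} {n : ℕ} (hn : 2 * (per B).card + B.depth ≤ n)
    (hcard : (per A).card * (per X).card = (per B).card)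
    (hex : ∀ c, (sysProd A X).Periodic c → ∃ b, B.Periodic b ∧ tau (sysProd A X) n c = tau B n b)
    {c : A.S × X.S} {b : B.S} (hc : (sysProd A X).Periodic c) (hb : B.Periodic b)
    (h : tau (sysProd A X) n c = tau B n b) :
    ((sysProd A X).unrollTree c).Iso (B.unrollTree b) := by
  have hpos : 0 < (per B).card := Finset.card_pos.2 ⟨b, mem_per.2 hb⟩
  obtain ⟨u, p, hu, hu0, hp⟩ := exists_back (sysProd A X) hc (per A ×ˢ per X) (by
    rintro ⟨a, x⟩ hv
    obtain ⟨h1, h2⟩ := periodic_prod.1 hv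
    exact Finset.mem_product.2 ⟨mem_per.2 h1, mem_per.2 h2⟩)
  have hp : p ≤ (per B).card := hp.trans (((per A).card_product (per X)).trans hcard).le
  obtain ⟨w, q, hw, hw0, hq⟩ := exists_back B hb (per B) (fun v hv => mem_per.2 hv)
  have hB := DB_depth B
  have hC : DB (sysProd A X) B.depth := DB_transfer hB (by omega) hex
  obtain ⟨N, rfl⟩ : ∃ N, n = N + B.depth := ⟨n - B.depth, by omega⟩
  apply iso_of_tau
  intro m
  rw [← hu0, ← hw0]
  exact main_tau (N := N) hC hB hu hw (by omega) (by rw [hu0, hw0]; exact h) m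

end UPf
end

/-- Let `A, X, B` be FDDS, `α` the number of unroll trees of `𝒰(B)`,
and `n ≥ 2α + depth B`. Then `𝒰(A)·𝒰(X) = 𝒰(B)` iff `𝒰(A)|_n · 𝒰(X)|_n = 𝒰(B)|_n`. -/
theorem stmt2 (A X B : FDDS) (n : ℕ)
    (hn : 2 * (FDDS.unroll B).length + B.depth ≤ n) :
    ForestEq (fprod (FDDS.unroll A) (FDDS.unroll X)) (FDDS.unroll B) ↔
      ForestEq (fprod (fcut (FDDS.unroll A) n) (fcut (FDDS.unroll X) n))
        (fcut (FDDS.unroll B) n) := by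
  rw [UPf.unroll_eq, UPf.unroll_eq, UPf.unroll_eq B]
  rw [UPf.unroll_eq, List.length_map, Finset.length_toList] at hn
  unfold ForestEq fcut
  rw [List.map_map, List.map_map, List.map_map, UPf.fprod_map, UPf.fprod_map]
  simp only [← Multiset.map_coe, Multiset.rel_map, Function.comp_apply]
  constructor
  · intro h
    refine h.mono fun a _ b _ hab => ?_
    exact UPf.iso_trans (UPf.prod_cut _ _ _) (UPf.iso_cut hab n)
  · intro h
    have hcut : ∀ (c : A.S × X.S) (b : B.S),
        (((A.unrollTree c.1).tcut n).tprod ((X.unrollTree c.2).tcut n)).Iso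
          ((B.unrollTree b).tcut n) → UPf.tau (UPf.sysProd A X) n c = UPf.tau B n b := by
      intro c b hcb
      apply UPf.tau_of_cut_iso
      exact UPf.iso_trans (UPf.iso_symm (UPf.iso_cut (UPf.unroll_prod A X c.1 c.2) n))
        (UPf.iso_trans (UPf.iso_symm (UPf.prod_cut _ _ _)) hcb)
    have hcard : (UPf.per A).card * (UPf.per X).card = (UPf.per B).card := by
      have := Multiset.card_eq_card_of_rel h
      simpa [List.length_product] using this
    have hex : ∀ c, (UPf.sysProd A X).Periodic c →
        ∃ b, B.Periodic b ∧ UPf.tau (UPf.sysProd A X) n c = UPf.tau B n b := by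
      rintro ⟨a, x⟩ hc
      obtain ⟨ha, hx⟩ := UPf.periodic_prod.1 hc
      have hm : (a, x) ∈ (↑((UPf.per A).toList ×ˢ (UPf.per X).toList) : Multiset (A.S × X.S)) := by
        simp [UPf.mem_per, ha, hx]
      obtain ⟨b, hb, hr⟩ := Multiset.exists_mem_of_rel_of_mem h hm
      exact ⟨b, by simpa [UPf.mem_per] using hb, hcut _ _ hr⟩
    refine h.mono fun c hc b hb hcb => ?_
    obtain ⟨a, x⟩ := c
    have hc' : A.Periodic a ∧ X.Periodic x := by simpa [UPf.mem_per] using hc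
    have hb' : B.Periodic b := by simpa [UPf.mem_per] using hb
    exact UPf.iso_trans (UPf.unroll_prod A X a x)
      (UPf.pair_iff hn hcard hex (UPf.periodic_prod.2 hc') hb' (hcut _ _ hcb))
end
end

section
/- Let A be a connected FDDS (its functional digraph has a single connected component) whose cycle has length p, let t be an unroll tree of 𝒰(A), and let n ≥ p + depth(A). Let (v_n, …, v_1, v_0) be a directed path in the cut t|_n such that depth(v_n) = n and v_0 is the root of t (so depth(v_i) = i for each i). Then the vertices v_p, …, v_1, v_0 all lie on the infinite branch of t; that is, each v_i with 0 ≤ i ≤ p is of the form (w,i) with w a periodic state of A. -/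
/-- Let `A` be a connected FDDS whose cycle has length `p` (i.e. `p` is
its number of periodic states), `t = t_u` an unroll tree of `𝒰(A)` (`u` periodic), and
`n ≥ p + depth A`. A directed path `(v_n, …, v_0)` in `t|_n` with `depth (v_n) = n` and
`v_0` the root is determined by the depth-`n` vertex `(w, n)` (so `f^[n] w = u` and
`v_i = (f^[n-i] w, i)`); then `v_p, …, v_0` all lie on the infinite branch of `t`,
that is, `f^[n-i] w` is a periodic state of `A` for every `i ≤ p`. -/
theorem stmt3 (A : FDDS) (hA : A.Connected) (p : ℕ)
    (hp : p = Nat.card { u : A.S // A.Periodic u })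
    (u : A.S) (hu : A.Periodic u) (n : ℕ) (hn : p + A.depth ≤ n)
    (w : A.S) (hw : A.f^[n] w = u) :
    ∀ i ≤ p, A.Periodic (A.f^[n - i] w) := by
  intro i hi
  haveI := A.fin
  have h1 : A.depthOf w ≤ A.depth := by
    apply le_csSup
    · have : {d | ∃ s : A.S, d = A.depthOf s} = Set.range A.depthOf := by
        ext d
        simp [eq_comm]
      rw [this]
      exact (Set.finite_range _).bddAbove
    · exact ⟨w, rfl⟩
  have h2 : A.Periodic (A.f^[A.depthOf w] w) := by
    have hne : {k | A.Periodic (A.f^[k] w)}.Nonempty := ⟨n, by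
      change A.Periodic (A.f^[n] w)
      rw [hw]
      exact hu⟩
    exact Nat.sInf_mem hne
  obtain ⟨q, hq, hfix⟩ := h2
  obtain ⟨m, hm⟩ : ∃ m, n - i = m + A.depthOf w := ⟨n - i - A.depthOf w, by omega⟩
  refine ⟨q, hq, ?_⟩
  rw [hm, Function.iterate_add_apply A.f m, ← Function.iterate_add_apply, Nat.add_comm q m,
    Function.iterate_add_apply, hfix]
end

section
/- Let a and b be unroll trees of FDDS admitting periodic patterns of sizes p_a and p_b respectively, and let n ≥ 2·max(p_a, p_b) + max(depth(a), depth(b)). Then a = b (as rooted trees up to isomorphism) if and only if a|_n = b|_n. -/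
namespace UnrollAux

/-- Isomorphism types of rooted trees cut at depth `m`, as hereditary multisets. -/
def Code : ℕ → Type
  | 0 => Unit
  | m + 1 => Multiset (Code m)

/-- The predecessors of a state. -/
abbrev Pre (A : FDDS) (w : A.S) : Type := {s : A.S // A.f s = w}

noncomputable instance preFintype (A : FDDS) (w : A.S) : Fintype (Pre A w) :=
  haveI := A.fin
  Fintype.ofFinite _

/-- The code of the tree of iterated preimages of `w`, cut at depth `m`. -/
noncomputable def code (A : FDDS) : ∀ m : ℕ, A.S → Code m
  | 0, _ => ()
  | m + 1, w => ((Finset.univ : Finset (Pre A w)).val.map fun s => code A m s.1 : Multiset (Code m))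

theorem code_succ (A : FDDS) (m : ℕ) (w : A.S) :
    code A (m + 1) w = ((Finset.univ : Finset (Pre A w)).val.map fun s => code A m s.1) := rfl

/-- The code has a vertex at the last depth. -/
def Full : ∀ m : ℕ, Code m → Prop
  | 0, _ => True
  | m + 1, M => ∃ x ∈ (show Multiset (Code m) from M), Full m x

/-- A code seen as a code of the next depth, adding no vertex. -/
def lift : ∀ m : ℕ, Code m → Code (m + 1)
  | 0, _ => (0 : Multiset (Code 0))
  | m + 1, M => (Multiset.map (lift m) (show Multiset (Code m) from M) : Multiset (Code (m + 1)))

/-- Truncation of codes. -/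
def trunc : ∀ m : ℕ, Code (m + 1) → Code m
  | 0, _ => ()
  | m + 1, M => (Multiset.map (trunc m) (show Multiset (Code (m + 1)) from M) : Multiset (Code m))

theorem trunc_code (A : FDDS) : ∀ (m : ℕ) (w : A.S), trunc m (code A (m + 1) w) = code A m w
  | 0, _ => rfl
  | m + 1, w => by
    change Multiset.map (trunc m) (Multiset.map _ _) = Multiset.map _ _
    rw [Multiset.map_map]
    exact Multiset.map_congr rfl fun s _ => trunc_code A m s.1

theorem full_code (A : FDDS) : ∀ (m : ℕ) (w : A.S), Full m (code A m w) ↔ ∃ y, A.f^[m] y = w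
  | 0, w => ⟨fun _ => ⟨w, rfl⟩, fun _ => trivial⟩
  | m + 1, w => by
    change (∃ x ∈ Multiset.map _ _, Full m x) ↔ _
    simp only [Multiset.mem_map]
    constructor
    · rintro ⟨_, ⟨s, _, rfl⟩, hs⟩
      obtain ⟨y, hy⟩ := (full_code A m s.1).1 hs
      exact ⟨y, by rw [Function.iterate_succ_apply', hy, s.2]⟩
    · rintro ⟨y, hy⟩
      rw [Function.iterate_succ_apply'] at hy
      exact ⟨_, ⟨⟨A.f^[m] y, hy⟩, Finset.mem_univ _, rfl⟩, (full_code A m _).2 ⟨y, rfl⟩⟩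

theorem lift_code (A : FDDS) : ∀ (m : ℕ) (w : A.S), ¬ Full m (code A m w) →
    code A (m + 1) w = lift m (code A m w)
  | 0, _, h => absurd trivial h
  | m + 1, w, h => by
    change Multiset.map _ _ = Multiset.map (lift m) (Multiset.map _ _)
    rw [Multiset.map_map]
    refine Multiset.map_congr rfl fun s hs => lift_code A m s.1 fun hf => h ?_
    exact ⟨_, Multiset.mem_map_of_mem _ hs, hf⟩

theorem periodic_iterate (A : FDDS) {u : A.S} (h : A.Periodic u) (k : ℕ) :
    A.Periodic (A.f^[k] u) := by
  obtain ⟨p, hp, e⟩ := h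
  exact ⟨p, hp, by rw [← Function.iterate_add_apply, add_comm, Function.iterate_add_apply, e]⟩

theorem periodic_full (A : FDDS) {u : A.S} (h : A.Periodic u) (m : ℕ) : ∃ y, A.f^[m] y = u := by
  obtain ⟨p, hp, e⟩ := h
  refine ⟨A.f^[m * p - m] u, ?_⟩
  rw [← Function.iterate_add_apply, Nat.add_sub_cancel' (Nat.le_mul_of_pos_right m hp), mul_comm]
  exact (Function.IsPeriodicPt.mul_const (show Function.IsPeriodicPt A.f p u from e) m)

theorem periodic_inj (A : FDDS) {u v : A.S} (hu : A.Periodic u) (hv : A.Periodic v)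
    (h : A.f u = A.f v) : u = v := by
  obtain ⟨p, hp, e⟩ := hu
  obtain ⟨q, hq, e'⟩ := hv
  have h1 : Function.IsPeriodicPt A.f (p * q) u :=
    Function.IsPeriodicPt.mul_const (show Function.IsPeriodicPt A.f p u from e) q
  have h2 : Function.IsPeriodicPt A.f (p * q) v :=
    Function.IsPeriodicPt.const_mul (show Function.IsPeriodicPt A.f q v from e') p
  obtain ⟨r, hr⟩ : ∃ r, p * q = r + 1 :=
    ⟨p * q - 1, by have := Nat.mul_pos hp hq; omega⟩
  rw [hr] at h1 h2
  rw [← h1.eq, ← h2.eq, Function.iterate_succ_apply, Function.iterate_succ_apply, h]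

theorem exists_periodic (A : FDDS) (s : A.S) : ∃ k, A.Periodic (A.f^[k] s) := by
  have := A.fin
  obtain ⟨i, j, hij, e⟩ := Finite.exists_ne_map_eq_of_infinite (fun k : ℕ => A.f^[k] s)
  wlog hlt : i < j generalizing i j
  · exact this j i hij.symm e.symm (by omega)
  refine ⟨i, j - i, by omega, ?_⟩
  rw [← Function.iterate_add_apply, Nat.sub_add_cancel hlt.le]
  exact e.symm

theorem nonperiodic_lt (A : FDDS) {m : ℕ} {y : A.S} (h : ¬ A.Periodic (A.f^[m] y)) :
    m < A.depth := by
  have := A.fin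
  have h1 : A.Periodic (A.f^[A.depthOf y] y) :=
    Nat.sInf_mem (s := {k | A.Periodic (A.f^[k] y)}) (exists_periodic A y)
  have h2 : A.depthOf y ≤ A.depth := by
    apply le_csSup
    · have : {d | ∃ s : A.S, d = A.depthOf s} = Set.range A.depthOf := by
        ext d; simp [eq_comm]
      rw [this]
      exact (Set.finite_range _).bddAbove
    · exact ⟨y, rfl⟩
  by_contra hm
  apply h
  have := periodic_iterate A h1 (m - A.depthOf y)
  rwa [← Function.iterate_add_apply, Nat.sub_add_cancel (by omega)] at this

open Classical in
/-- The code of the finite tree hooked at `w`. -/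
noncomputable def hook (A : FDDS) (m : ℕ) (w : A.S) : Multiset (Code m) :=
  ((Finset.univ : Finset (Pre A w)).val.filter fun s => ¬ A.Periodic s.1).map fun s => code A m s.1

theorem trunc_hook (A : FDDS) (m : ℕ) (w : A.S) :
    (hook A (m + 1) w).map (trunc m) = hook A m w := by
  unfold hook
  rw [Multiset.map_map]
  exact Multiset.map_congr rfl fun s _ => trunc_code A m s.1

theorem hook_not_full (A : FDDS) {m : ℕ} (hm : A.depth ≤ m) {s : A.S} (hs : ¬ A.Periodic s) :
    ¬ Full m (code A m s) := by
  rw [full_code]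
  rintro ⟨y, rfl⟩
  exact absurd (nonperiodic_lt A hs) (by omega)

theorem lift_hook (A : FDDS) {m : ℕ} (hm : A.depth ≤ m) (w : A.S) :
    hook A (m + 1) w = (hook A m w).map (lift m) := by
  classical
  unfold hook
  rw [Multiset.map_map]
  refine Multiset.map_congr rfl fun s hs => lift_code A m s.1 ?_
  exact hook_not_full A hm (Multiset.mem_filter.1 hs).2

theorem code_eq_hook (A : FDDS) (m : ℕ) {w w' : A.S} (hw' : A.Periodic w') (h : A.f w' = w) :
    code A (m + 1) w = (code A m w' ::ₘ hook A m w : Multiset (Code m)) := by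
  classical
  rw [code_succ, ← Multiset.filter_add_not (fun s : Pre A w => A.Periodic s.1) Finset.univ.val,
    Multiset.map_add]
  have : Multiset.filter (fun s : Pre A w => A.Periodic s.1) Finset.univ.val = {⟨w', h⟩} := by
    rw [← Finset.filter_val, ← Finset.singleton_val]
    congr 1
    ext s
    simp only [Finset.mem_filter, Finset.mem_univ, true_and, Finset.mem_singleton]
    constructor
    · intro hs
      exact Subtype.ext (periodic_inj A hs hw' (s.2.trans h.symm))
    · rintro rfl
      exact hw'
  rw [this]
  unfold hook
  simp only [Multiset.map_singleton, Multiset.singleton_add]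
  congr!

theorem split_eq (A B : FDDS) {m : ℕ} (hA : A.depth ≤ m) (hB : B.depth ≤ m)
    {w w' : A.S} {v v' : B.S} (hw : A.Periodic w') (hv : B.Periodic v')
    (ew : A.f w' = w) (ev : B.f v' = v) (h : code A (m + 1) w = code B (m + 1) v) :
    code A m w' = code B m v' ∧ hook A m w = hook B m v := by
  classical
  rw [code_eq_hook A m hw ew, code_eq_hook B m hv ev] at h
  have key : ∀ (C : FDDS) (hC : C.depth ≤ m) (x x' : C.S), C.Periodic x' → 
      Multiset.filter (Full m) (code C m x' ::ₘ hook C m x) = {code C m x'} := by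
    intro C hC x x' hx
    rw [Multiset.filter_cons_of_pos _ ((full_code C m x').2 (periodic_full C hx m)),
      Multiset.filter_eq_nil.2]
    · rfl
    · intro c hc
      obtain ⟨s, hs, rfl⟩ := Multiset.mem_map.1 hc
      exact hook_not_full C hC (Multiset.mem_filter.1 hs).2
  have h1 := congrArg (fun M : Multiset (Code m) => Multiset.filter (Full m) M) h
  change Multiset.filter (Full m) _ = Multiset.filter (Full m) _ at h1
  rw [key A hA w w' hw, key B hB v v' hv] at h1
  have h2 := Multiset.singleton_inj.1 h1
  rw [h2] at h
  exact ⟨h2, (Multiset.cons_inj_right _).1 h⟩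

theorem hook_all (A B : FDDS) {d : ℕ} (hA : A.depth ≤ d) (hB : B.depth ≤ d) {w : A.S} {v : B.S}
    (h : hook A d w = hook B d v) (m : ℕ) : hook A m w = hook B m v := by
  have up : ∀ j, hook A (d + j) w = hook B (d + j) v := by
    intro j
    induction j with
    | zero => exact h
    | succ j ih =>
      change hook A (d + j + 1) w = hook B (d + j + 1) v
      rw [lift_hook A (by omega), lift_hook B (by omega), ih]
  have dn : ∀ j m, hook A (m + j) w = hook B (m + j) v → hook A m w = hook B m v := by
    intro j
    induction j with
    | zero => intro m h; exact h
    | succ j ih =>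
      intro m h
      apply ih
      rw [← trunc_hook A, ← trunc_hook B]
      exact congrArg (Multiset.map (trunc (m + j))) h
  apply dn d m
  rw [add_comm]
  exact up m

theorem hook_down (A B : FDDS) {w : A.S} {v : B.S} {d m : ℕ} (hdm : d ≤ m)
    (h : hook A m w = hook B m v) : hook A d w = hook B d v := by
  obtain ⟨j, rfl⟩ := Nat.exists_eq_add_of_le hdm
  clear hdm
  induction j with
  | zero => exact h
  | succ j ih =>
    apply ih
    rw [← trunc_hook A, ← trunc_hook B]
    exact congrArg (Multiset.map (trunc (d + j))) h

theorem code_down (A B : FDDS) {w : A.S} {v : B.S} {d m : ℕ} (hdm : d ≤ m)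
    (h : code A m w = code B m v) : code A d w = code B d v := by
  obtain ⟨j, rfl⟩ := Nat.exists_eq_add_of_le hdm
  clear hdm
  induction j with
  | zero => exact h
  | succ j ih =>
    apply ih
    rw [← trunc_code A, ← trunc_code B]
    exact congrArg (trunc (d + j)) h

theorem f_shift (A : FDDS) {u : A.S} (hu : A.Periodic u) (i : ℕ) :
    A.f (A.shiftState u (i + 1)) = A.shiftState u i := by
  have h : 1 ≤ A.minPeriod u ∧ A.f^[A.minPeriod u] u = u :=
    Nat.sInf_mem (s := {p | 1 ≤ p ∧ A.f^[p] u = u}) hu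
  unfold FDDS.shiftState
  rw [← Function.iterate_succ_apply' A.f]
  have : ((i + 1) * (A.minPeriod u - 1)).succ = i * (A.minPeriod u - 1) + A.minPeriod u := by
    rw [add_mul]; omega
  rw [this, Function.iterate_add_apply, h.2]

theorem shift_periodic (A : FDDS) {u : A.S} (hu : A.Periodic u) (i : ℕ) :
    A.Periodic (A.shiftState u i) := periodic_iterate A hu _

theorem shift_zero (A : FDDS) (u : A.S) : A.shiftState u 0 = u := by
  simp [FDDS.shiftState]

/-- Isomorphic trees have isomorphic cuts. -/
theorem iso_tcut {t s : RTree} (h : RTree.Iso t s) (n : ℕ) :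
    RTree.Iso (t.tcut n) (s.tcut n) := by
  obtain ⟨e, he⟩ := h
  exact ⟨fun k => Equiv.prodCongr (Equiv.refl _) (e k), fun k x => Prod.ext rfl (he k x.2)⟩

theorem map_univ_equiv {X Y C : Type} [Fintype X] [Fintype Y] (e : X ≃ Y) (f : X → C) (g : Y → C)
    (h : ∀ x, f x = g (e x)) :
    (Finset.univ : Finset X).val.map f = (Finset.univ : Finset Y).val.map g := by
  rw [← Multiset.map_univ_val_equiv e, Multiset.map_map]
  exact Multiset.map_congr rfl fun x _ => h x

theorem exists_equiv {X Y C : Type} [Fintype X] [Fintype Y] (f : X → C) (g : Y → C)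
    (h : (Finset.univ : Finset X).val.map f = (Finset.univ : Finset Y).val.map g) :
    ∃ e : X ≃ Y, ∀ x, f x = g (e x) := by
  classical
  have hc : ∀ c, Nonempty ({x // f x = c} ≃ {y // g y = c}) := by
    intro c
    refine ⟨Fintype.equivOfCardEq ?_⟩
    have := congrArg (Multiset.count c) h
    rw [Multiset.count_map, Multiset.count_map, ← Finset.filter_val, ← Finset.filter_val] at this
    rw [Fintype.card_subtype, Fintype.card_subtype]
    simp only [eq_comm (a := c)] at this
    exact this
  let E := fun c => (hc c).some
  refine ⟨(Equiv.sigmaFiberEquiv f).symm.trans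
    ((Equiv.sigmaCongrRight E).trans (Equiv.sigmaFiberEquiv g)), fun x => ?_⟩
  exact (E (f x) ⟨x, rfl⟩).2.symm

/-- Predecessors of a vertex of an unroll tree are its children. -/
def childEquiv (A : FDDS) (u : A.S) (k : ℕ) (x : (A.unrollTree u).level k) :
    {y : (A.unrollTree u).level (k + 1) // (A.unrollTree u).parent k y = x} ≃ Pre A x.1 where
  toFun y := ⟨y.1.1, congrArg Subtype.val y.2⟩
  invFun s := ⟨⟨s.1, by rw [Function.iterate_succ_apply, s.2]; exact x.2⟩, Subtype.ext s.2⟩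
  left_inv _ := rfl
  right_inv _ := rfl

/-- The same for the cut of an unroll tree. -/
def cutChildEquiv (A : FDDS) (u : A.S) (n k : ℕ) (hk : k + 1 ≤ n)
    (x : ((A.unrollTree u).tcut n).level k) :
    {y : ((A.unrollTree u).tcut n).level (k + 1) // ((A.unrollTree u).tcut n).parent k y = x} ≃
      Pre A x.2.1 where
  toFun y := ⟨y.1.2.1, congrArg (fun z => z.2.1) y.2⟩
  invFun s := ⟨(⟨hk⟩, ⟨s.1, by rw [Function.iterate_succ_apply, s.2]; exact x.2.2⟩),
    Prod.ext rfl (Subtype.ext s.2)⟩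
  left_inv _ := rfl
  right_inv _ := rfl

theorem code_of_iso_cut (A B : FDDS) (u : A.S) (v : B.S) (n : ℕ)
    (h : RTree.Iso ((A.unrollTree u).tcut n) ((B.unrollTree v).tcut n)) :
    code A n u = code B n v := by
  obtain ⟨e, he⟩ := h
  have key : ∀ (m k : ℕ) (hk : m + k ≤ n) (x : ((A.unrollTree u).tcut n).level k),
      code A m x.2.1 = code B m (e k x).2.1 := by
    intro m
    induction m with
    | zero => intros; rfl
    | succ m ih =>
      intro k hk x
      have hk1 : k + 1 ≤ n := by omega
      let F : {y // ((A.unrollTree u).tcut n).parent k y = x} ≃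
          {y // ((B.unrollTree v).tcut n).parent k y = e k x} :=
        Equiv.subtypeEquiv (e (k + 1)) fun y => by
          rw [← he k y]
          exact (e k).injective.eq_iff.symm
      let E : Pre A x.2.1 ≃ Pre B (e k x).2.1 :=
        (cutChildEquiv A u n k hk1 x).symm.trans (F.trans (cutChildEquiv B v n k hk1 (e k x)))
      exact map_univ_equiv E _ _ fun s =>
        ih (k + 1) (by omega) ((cutChildEquiv A u n k hk1 x).symm s).1
  have h0 := key n 0 le_rfl (⟨Nat.zero_le n⟩, ⟨u, rfl⟩)
  have h1 : (e 0 (⟨Nat.zero_le n⟩, ⟨u, rfl⟩)).2.1 = v := (e 0 (⟨Nat.zero_le n⟩, ⟨u, rfl⟩)).2.2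
  rw [h1] at h0
  exact h0

theorem exists_bound (A B : FDDS) :
    ∃ N, ∀ (a : A.S) (b : B.S), code A N a = code B N b → ∀ m, code A m a = code B m b := by
  classical
  have := A.fin
  have := B.fin
  have : ∀ p : A.S × B.S, ∃ N, code A N p.1 = code B N p.2 → ∀ m, code A m p.1 = code B m p.2 := by
    intro p
    by_contra hc
    push Not at hc
    obtain ⟨_, m, hm⟩ := hc 0
    exact hm (hc m).1
  choose N hN using this
  refine ⟨Finset.univ.sup N, fun a b h => hN (a, b) ?_⟩
  exact code_down A B (Finset.le_sup (Finset.mem_univ _)) h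

theorem pre_equiv (A B : FDDS) (a : A.S) (b : B.S) (h : ∀ m, code A m a = code B m b) :
    ∃ e : Pre A a ≃ Pre B b, ∀ s, ∀ m, code A m s.1 = code B m (e s).1 := by
  obtain ⟨N, hN⟩ := exists_bound A B
  obtain ⟨e, he⟩ := exists_equiv (fun s : Pre A a => code A N s.1) (fun s : Pre B b => code B N s.1)
    (h (N + 1))
  exact ⟨e, fun s => hN _ _ (he s)⟩

/-- Equivalences between two levels that respect all codes. -/
abbrev LevelEquiv (A B : FDDS) (u : A.S) (v : B.S) (k : ℕ) : Type :=
  {e : (A.unrollTree u).level k ≃ (B.unrollTree v).level k //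
    ∀ x m, code A m x.1 = code B m (e x).1}

theorem level_step (A B : FDDS) (u : A.S) (v : B.S) (k : ℕ) (e : LevelEquiv A B u v k) :
    ∃ e' : LevelEquiv A B u v (k + 1), ∀ x : (A.unrollTree u).level (k + 1),
      e.1 ((A.unrollTree u).parent k x) = (B.unrollTree v).parent k (e'.1 x) := by
  choose F hF using fun x => pre_equiv A B x.1 (e.1 x).1 (e.2 x)
  let G : ∀ x, {y // (A.unrollTree u).parent k y = x} ≃
      {y // (B.unrollTree v).parent k y = e.1 x} := fun x =>
    (childEquiv A u k x).trans ((F x).trans (childEquiv B v k (e.1 x)).symm)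
  let E := (Equiv.sigmaFiberEquiv ((A.unrollTree u).parent k)).symm.trans
    ((Equiv.sigmaCongr e.1 G).trans (Equiv.sigmaFiberEquiv ((B.unrollTree v).parent k)))
  have hE : ∀ x, E x = (G ((A.unrollTree u).parent k x) ⟨x, rfl⟩).1 := fun x => rfl
  refine ⟨⟨E, fun x m => ?_⟩, fun x => ?_⟩
  · rw [hE]
    exact hF _ (childEquiv A u k ((A.unrollTree u).parent k x) ⟨x, rfl⟩) m
  · change _ = (B.unrollTree v).parent k (E x)
    rw [hE]
    exact (G ((A.unrollTree u).parent k x) ⟨x, rfl⟩).2.symm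

theorem iso_of_code (A B : FDDS) (u : A.S) (v : B.S) (h : ∀ m, code A m u = code B m v) :
    RTree.Iso (A.unrollTree u) (B.unrollTree v) := by
  choose next hnext using level_step A B u v
  let e0 : LevelEquiv A B u v 0 :=
    ⟨{ toFun := fun _ => ⟨v, rfl⟩
       invFun := fun _ => ⟨u, rfl⟩
       left_inv := fun x => Subtype.ext x.2.symm
       right_inv := fun x => Subtype.ext x.2.symm }, fun x m => by
        have hx : x.1 = u := x.2
        rw [hx]
        exact h m⟩
  let e : ∀ k, LevelEquiv A B u v k := fun k => Nat.rec e0 next k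
  exact ⟨fun k => (e k).1, fun k x => hnext k (e k) x⟩

/-- The sequence of hooked trees inherits the periodic pattern. -/
theorem hook_pattern (A : FDDS) {u : A.S} (hu : A.Periodic u) {p : ℕ} (hp : A.PatternSize u p)
    {d : ℕ} (hd : A.depth ≤ d) (k : ℕ) :
    hook A d (A.shiftState u (k + p)) = hook A d (A.shiftState u k) := by
  have key : ∀ k m, code A m (A.shiftState u (k + p)) = code A m (A.shiftState u k) := by
    intro k
    induction k with
    | zero =>
      intro m
      rw [zero_add, shift_zero]
      exact code_of_iso_cut A A _ _ m (iso_tcut hp.2 m)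
    | succ k ih =>
      intro m
      rw [add_right_comm]
      refine code_down A A (le_max_left m d) (split_eq A A (le_trans hd (le_max_right m d))
        (le_trans hd (le_max_right m d)) (shift_periodic A hu _) (shift_periodic A hu _)
        (f_shift A hu _) (f_shift A hu _) (ih _)).1
  exact (split_eq A A hd hd (shift_periodic A hu _) (shift_periodic A hu _)
        (f_shift A hu _) (f_shift A hu _) (key k _)).2

theorem fine_wilf {C : Type} (a b : ℕ → C) (p q : ℕ) (hp : 1 ≤ p) (hq : 1 ≤ q) (ha : ∀ k, a (k + p) = a k)
    (hb : ∀ k, b (k + q) = b k) (h : ∀ k, k < p + q → a k = b k) (k : ℕ) : a k = b k := by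
  induction k using Nat.strong_induction_on with
  | _ k ih =>
    by_cases hk : k < p + q
    · exact h k hk
    · obtain ⟨j, rfl⟩ := Nat.exists_eq_add_of_le (not_lt.1 hk)
      calc a (p + q + j) = a (q + j) := by rw [← ha (q + j)]; congr 1; omega
        _ = b (q + j) := ih _ (by omega)
        _ = b j := by rw [← hb j]; congr 1; omega
        _ = a j := (ih _ (by omega)).symm
        _ = a (p + j) := by rw [← ha j]; congr 1; omega
        _ = b (p + j) := ih _ (by omega)
        _ = b (p + q + j) := by rw [← hb (p + j)]; congr 1; omega

end UnrollAux

/-- Let `a = t_{u_a}` and `b = t_{u_b}` be unroll trees of FDDS `A` and `B`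
admitting periodic patterns of sizes `p_a` and `p_b`, and let
`n ≥ 2·max(p_a,p_b) + max(depth a, depth b)` (the depth of an unroll tree of an FDDS
being the depth of the FDDS). Then `a = b` (up to isomorphism) iff `a|_n = b|_n`. -/
theorem stmt4 (A B : FDDS) (ua : A.S) (hua : A.Periodic ua) (ub : B.S) (hub : B.Periodic ub)
    (pa pb : ℕ) (hpa : A.PatternSize ua pa) (hpb : B.PatternSize ub pb)
    (n : ℕ) (hn : 2 * max pa pb + max A.depth B.depth ≤ n) :
    RTree.Iso (A.unrollTree ua) (B.unrollTree ub) ↔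
      RTree.Iso ((A.unrollTree ua).tcut n) ((B.unrollTree ub).tcut n) := by
  open UnrollAux in
  refine ⟨fun h => iso_tcut h n, fun h => ?_⟩
  have hc := UnrollAux.code_of_iso_cut A B ua ub n h
  set d := max A.depth B.depth with hd
  have hA : A.depth ≤ d := le_max_left _ _
  have hB : B.depth ≤ d := le_max_right _ _
  have h1 : ∀ k m, m + k = n → d ≤ m →
      UnrollAux.code A m (A.shiftState ua k) = UnrollAux.code B m (B.shiftState ub k) := by
    intro k
    induction k with
    | zero =>
      rintro m rfl _
      rw [UnrollAux.shift_zero, UnrollAux.shift_zero]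
      exact hc
    | succ k ih =>
      intro m hm hdm
      exact (UnrollAux.split_eq A B (hA.trans hdm) (hB.trans hdm)
        (UnrollAux.shift_periodic A hua _) (UnrollAux.shift_periodic B hub _)
        (UnrollAux.f_shift A hua _) (UnrollAux.f_shift B hub _)
        (ih (m + 1) (by omega) (by omega))).1
  have h2 : ∀ k, k < pa + pb →
      UnrollAux.hook A d (A.shiftState ua k) = UnrollAux.hook B d (B.shiftState ub k) := by
    intro k hk
    have hdm : d ≤ n - k - 1 := by omega
    exact UnrollAux.hook_down A B hdm (UnrollAux.split_eq A B (hA.trans hdm) (hB.trans hdm)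
        (UnrollAux.shift_periodic A hua _) (UnrollAux.shift_periodic B hub _)
        (UnrollAux.f_shift A hua _) (UnrollAux.f_shift B hub _)
        (h1 k (n - k - 1 + 1) (by omega) (by omega))).2
  have h3 := UnrollAux.fine_wilf _ _ pa pb hpa.1 hpb.1 (UnrollAux.hook_pattern A hua hpa hA)
    (UnrollAux.hook_pattern B hub hpb hB) h2
  have h4 : ∀ m k, UnrollAux.code A m (A.shiftState ua k) =
      UnrollAux.code B m (B.shiftState ub k) := by
    intro m
    induction m with
    | zero => intro k; rfl
    | succ m ih =>
      intro k
      rw [UnrollAux.code_eq_hook A m (UnrollAux.shift_periodic A hua (k + 1))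
        (UnrollAux.f_shift A hua k), UnrollAux.code_eq_hook B m
        (UnrollAux.shift_periodic B hub (k + 1)) (UnrollAux.f_shift B hub k), ih (k + 1),
        UnrollAux.hook_all A B hA hB (h3 k) m]
  apply UnrollAux.iso_of_code
  intro m
  have := h4 m 0
  rwa [UnrollAux.shift_zero, UnrollAux.shift_zero] at this
end

section
/- Let A and B be FDDS, let α be the number of unroll trees of 𝒰(B), and let n ≥ 2α + depth(B). If 𝒰(A)|_n = 𝒰(B)|_n then depth(A) = depth(B). -/
namespace FDDS

theorem periodic_apply (A : FDDS) {u : A.S} (h : A.Periodic u) : A.Periodic (A.f u) := by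
  obtain ⟨p, hp, hu⟩ := h
  refine ⟨p, hp, ?_⟩
  rw [← Function.iterate_succ_apply, Function.iterate_succ_apply', hu]

theorem exists_periodic (A : FDDS) (s : A.S) : ∃ k, A.Periodic (A.f^[k] s) := by
  haveI := A.fin
  obtain ⟨i, j, hij, he⟩ := Finite.exists_ne_map_eq_of_infinite (fun k : ℕ => A.f^[k] s)
  have key : ∀ i j : ℕ, i < j → A.f^[i] s = A.f^[j] s → A.Periodic (A.f^[i] s) := by
    intro i j hlt he
    refine ⟨j - i, by omega, ?_⟩
    rw [← Function.iterate_add_apply, Nat.sub_add_cancel hlt.le, he]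
  rcases lt_or_gt_of_ne hij with hlt | hlt
  · exact ⟨i, key i j hlt he⟩
  · exact ⟨j, key j i hlt he.symm⟩

theorem periodic_mono (A : FDDS) (s : A.S) {k l : ℕ} (hkl : k ≤ l)
    (h : A.Periodic (A.f^[k] s)) : A.Periodic (A.f^[l] s) := by
  induction hkl with
  | refl => exact h
  | step _ ih => rw [Function.iterate_succ_apply']; exact A.periodic_apply ih

theorem depthOf_le_iff (A : FDDS) (s : A.S) (k : ℕ) :
    A.depthOf s ≤ k ↔ A.Periodic (A.f^[k] s) := by
  constructor
  · intro h
    exact A.periodic_mono s h (Nat.sInf_mem (A.exists_periodic s))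
  · intro h
    exact Nat.sInf_le h

theorem depth_le_iff (A : FDDS) (k : ℕ) :
    A.depth ≤ k ↔ ∀ s, A.Periodic (A.f^[k] s) := by
  haveI := A.fin
  have hb : BddAbove {d | ∃ s : A.S, d = A.depthOf s} := by
    have : {d | ∃ s : A.S, d = A.depthOf s} = Set.range A.depthOf := by
      ext d; simp [eq_comm]
    rw [this]
    exact (Set.finite_range _).bddAbove
  constructor
  · intro h s
    rw [← depthOf_le_iff]
    exact (le_csSup hb ⟨s, rfl⟩).trans h
  · intro h
    by_cases hne : Nonempty A.S
    · obtain ⟨s0⟩ := hne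
      refine csSup_le ⟨_, s0, rfl⟩ ?_
      rintro d ⟨s, rfl⟩
      exact (A.depthOf_le_iff s k).2 (h s)
    · have : {d | ∃ s : A.S, d = A.depthOf s} = ∅ := by
        ext d
        simp only [Set.mem_setOf_eq, Set.mem_empty_iff_false, iff_false]
        rintro ⟨s, _⟩
        exact hne ⟨s⟩
      simp [depth, this]

/-- The states of depth at most `k`. -/
noncomputable def P (A : FDDS) (k : ℕ) : Finset A.S :=
  haveI := A.fin
  letI : DecidablePred fun s => A.Periodic (A.f^[k] s) := Classical.decPred _
  Finset.univ.filter fun s => A.Periodic (A.f^[k] s)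

theorem mem_P (A : FDDS) (k : ℕ) (s : A.S) : s ∈ A.P k ↔ A.Periodic (A.f^[k] s) := by
  simp [P]

theorem depth_le_iff_card (A : FDDS) (k : ℕ) :
    A.depth ≤ k ↔ (A.P k).card = (A.P (k + 1)).card := by
  have hsub : A.P k ⊆ A.P (k + 1) := fun s hs =>
    (A.mem_P _ s).2 (A.periodic_mono s (Nat.le_succ k) ((A.mem_P _ s).1 hs))
  rw [depth_le_iff]
  constructor
  · intro h
    congr 1
    ext s
    rw [mem_P, mem_P]
    exact ⟨fun _ => A.periodic_mono s (Nat.le_succ k) (h s), fun _ => h s⟩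
  · intro h
    have he : A.P k = A.P (k + 1) := Finset.eq_of_subset_of_card_le hsub h.ge
    have step : ∀ s, A.Periodic (A.f^[k + 1] s) → A.Periodic (A.f^[k] s) := by
      intro s hs
      rwa [← mem_P, he, mem_P]
    have all : ∀ j s, A.Periodic (A.f^[k + j] s) → A.Periodic (A.f^[k] s) := by
      intro j
      induction j with
      | zero => intro s hs; exact hs
      | succ j ih =>
        intro s hs
        apply step
        rw [Function.iterate_succ_apply]
        apply ih
        rw [← Function.iterate_succ_apply]
        exact hs
    intro s
    obtain ⟨j, hj⟩ := A.exists_periodic s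
    exact all j s (A.periodic_mono s (Nat.le_add_left j k) hj)

theorem unroll_eq (A : FDDS) : A.unroll = (A.P 0).toList.map A.unrollTree := by
  unfold unroll P
  rfl

theorem sum_level (A : FDDS) (n k : ℕ) (hk : k ≤ n) :
    (((fcut A.unroll n : Forest) : Multiset RTree).map
      fun t => Nat.card (t.level k)).sum = (A.P k).card := by
  classical
  haveI := A.fin
  rw [unroll_eq]
  have h1 : (A.P k).card = ∑ u ∈ A.P 0, ((A.P k).filter fun s => A.f^[k] s = u).card := by
    apply Finset.card_eq_sum_card_fiberwise
    intro s hs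
    exact (A.mem_P 0 _).2 ((A.mem_P k s).1 hs)
  rw [h1, fcut, Multiset.map_coe, Multiset.sum_coe, List.map_map, List.map_map,
    Finset.sum_map_toList]
  apply Finset.sum_congr rfl
  intro u hu
  have hu' : A.Periodic u := (A.mem_P 0 u).1 hu
  change Nat.card (PLift (k ≤ n) × { s : A.S // A.f^[k] s = u }) = _
  haveI : Unique (PLift (k ≤ n)) := ⟨⟨⟨hk⟩⟩, fun _ => rfl⟩
  rw [Nat.card_prod, Nat.card_unique, one_mul, Nat.card_eq_fintype_card, Fintype.card_subtype]
  congr 1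
  ext s
  simp only [Finset.mem_filter, Finset.mem_univ, true_and, mem_P]
  constructor
  · intro h; exact ⟨h ▸ hu', h⟩
  · exact fun h => h.2

end FDDS

theorem rel_sum_level (k : ℕ) {S T : Multiset RTree} (h : Multiset.Rel RTree.Iso S T) :
    (S.map fun t => Nat.card (t.level k)).sum = (T.map fun t => Nat.card (t.level k)).sum := by
  induction h with
  | zero => rfl
  | cons hab _ ih =>
    obtain ⟨e, _⟩ := hab
    rw [Multiset.map_cons, Multiset.map_cons, Multiset.sum_cons, Multiset.sum_cons, ih,
      Nat.card_congr (e k)]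

/-- Let `A` and `B` be FDDS, `α` the number of unroll trees of `𝒰(B)`,
and `n ≥ 2α + depth B`. If `𝒰(A)|_n = 𝒰(B)|_n` then `depth A = depth B`. -/
theorem stmt5 (A B : FDDS) (n : ℕ)
    (hn : 2 * (FDDS.unroll B).length + B.depth ≤ n)
    (h : ForestEq (fcut (FDDS.unroll A) n) (fcut (FDDS.unroll B) n)) :
    A.depth = B.depth := by
  have hc : ∀ k, k ≤ n → (A.P k).card = (B.P k).card := by
    intro k hk
    rw [← A.sum_level n k hk, ← B.sum_level n k hk]
    exact rel_sum_level k h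
  have hlen : B.unroll.length = (B.P 0).card := by simp [FDDS.unroll_eq]
  by_cases h0 : (B.P 0).card = 0
  · have key : ∀ C : FDDS, (C.P 0).card = 0 → C.depth = 0 := by
      intro C hC
      rw [← Nat.le_zero, FDDS.depth_le_iff]
      intro s
      obtain ⟨k, hk⟩ := C.exists_periodic s
      have : C.f^[k] s ∈ C.P 0 := (C.mem_P 0 _).2 hk
      rw [Finset.card_eq_zero.1 hC] at this
      simp at this
    rw [key B h0, key A ((hc 0 (Nat.zero_le n)).trans h0)]
  · have hle : A.depth ≤ B.depth := by
      rw [FDDS.depth_le_iff_card, hc _ (by omega), hc _ (by omega)]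
      exact (B.depth_le_iff_card _).1 le_rfl
    refine le_antisymm hle ?_
    rw [FDDS.depth_le_iff_card, ← hc _ (by omega), ← hc _ (by omega)]
    exact (A.depth_le_iff_card _).1 le_rfl
end

section
/- Let A be a forest of finite rooted trees, k ≥ 1 an integer, and R a forest of finite rooted trees with R^k = A. If some depth level d of A contains β ≥ 2 vertices, then β = s^k for some integer s ≥ 2; in particular 2^k ≤ β, and hence k ≤ ⌊log₂ m⌋ where m is the total number of vertices of A. -/
theorem card_tprod (t s : RTree) (d : ℕ) :
    @Fintype.card _ ((t.tprod s).fin d)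
      = @Fintype.card _ (t.fin d) * @Fintype.card _ (s.fin d) := by
  letI := t.fin d
  letI := s.fin d
  rw [← Fintype.card_prod]
  exact @Fintype.card_congr _ _ ((t.tprod s).fin d) _ (Equiv.refl _)

theorem levelCard_cons (t : RTree) (F : Forest) (d : ℕ) :
    levelCard (t :: F) d = @Fintype.card _ (t.fin d) + levelCard F d := by
  simp [levelCard]

theorem levelCard_append (F G : Forest) (d : ℕ) :
    levelCard (F ++ G) d = levelCard F d + levelCard G d := by
  simp [levelCard]

theorem levelCard_map_tprod (t : RTree) (G : Forest) (d : ℕ) :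
    levelCard (G.map fun s => t.tprod s) d = @Fintype.card _ (t.fin d) * levelCard G d := by
  induction G with
  | nil => simp [levelCard]
  | cons s G ih => rw [List.map_cons, levelCard_cons, levelCard_cons, ih, card_tprod, mul_add]

theorem levelCard_fprod (F G : Forest) (d : ℕ) :
    levelCard (fprod F G) d = levelCard F d * levelCard G d := by
  induction F with
  | nil => simp [levelCard, fprod]
  | cons t F ih =>
    have : fprod (t :: F) G = (G.map fun s => t.tprod s) ++ fprod F G := by simp [fprod]
    rw [this, levelCard_append, levelCard_map_tprod, ih, levelCard_cons, add_mul]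

theorem levelCard_fpow (F : Forest) (d n : ℕ) :
    levelCard (fpow F (n + 1)) d = levelCard F d ^ (n + 1) := by
  induction n with
  | zero => simp [fpow]
  | succ n ih =>
    have : fpow F (n + 1 + 1) = fprod F (fpow F (n + 1)) := rfl
    rw [this, levelCard_fprod, ih, pow_succ' _ (n + 1)]

theorem levelCard_congr (F G : Forest) (h : ForestEq F G) (d : ℕ) :
    levelCard F d = levelCard G d := by
  have key : ∀ (M N : Multiset RTree), Multiset.Rel RTree.Iso M N →
      (M.map fun t => @Fintype.card _ (t.fin d)).sum
        = (N.map fun t => @Fintype.card _ (t.fin d)).sum := by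
    intro M N hMN
    induction hMN with
    | zero => rfl
    | cons hab _ ih =>
      obtain ⟨e, _⟩ := hab
      rw [Multiset.map_cons, Multiset.map_cons, Multiset.sum_cons, Multiset.sum_cons, ih,
        @Fintype.card_congr _ _ (RTree.fin _ d) (RTree.fin _ d) (e d)]
  simpa [levelCard] using key _ _ h

theorem depth_le_fdepth (F : Forest) (t : RTree) (ht : t ∈ F) : t.depth ≤ fdepth F := by
  induction F with
  | nil => simp at ht
  | cons s F ih =>
    have : fdepth (s :: F) = max s.depth (fdepth F) := rfl
    rw [this]
    rcases List.mem_cons.1 ht with rfl | h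
    · exact le_max_left _ _
    · exact (ih h).trans (le_max_right _ _)

theorem le_fdepth (F : Forest) (hF : ∀ t ∈ F, t.IsFinite) (d : ℕ) (h : levelCard F d ≠ 0) :
    d ≤ fdepth F := by
  by_contra hd
  apply h
  unfold levelCard
  apply List.sum_eq_zero
  intro x hx
  obtain ⟨t, ht, rfl⟩ := List.mem_map.1 hx
  rw [@Fintype.card_eq_zero_iff _ (t.fin d)]
  by_contra hne
  rw [not_isEmpty_iff] at hne
  apply hd
  refine le_trans ?_ (depth_le_fdepth F t ht)
  obtain ⟨N, hN⟩ := hF t ht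
  refine le_csSup ⟨N, ?_⟩ hne
  intro n hn
  by_contra hlt
  exact (hN n (by omega)).false hn.some

/-- Let `A` be a forest of finite rooted trees, `k ≥ 1`, and `R` a
forest of finite rooted trees with `R^k = A`. If some depth level `d` of `A` contains
`β ≥ 2` vertices, then `β = s^k` for some integer `s ≥ 2`; in particular `2^k ≤ β`,
and hence `k ≤ ⌊log₂ m⌋` where `m` is the total number of vertices of `A`. -/
theorem stmt11 (A R : Forest)
    (hA : ∀ t ∈ A, t.IsFinite) (hR : ∀ t ∈ R, t.IsFinite)
    (k : ℕ) (hk : 1 ≤ k) (h : ForestEq (fpow R k) A)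
    (d β : ℕ) (hβ : levelCard A d = β) (hβ2 : 2 ≤ β)
    (m : ℕ) (hm : m = totalCard A) :
    (∃ s, 2 ≤ s ∧ β = s ^ k) ∧ 2 ^ k ≤ β ∧ k ≤ Nat.log 2 m := by
  have hs : β = levelCard R d ^ k := by
    obtain ⟨n, rfl⟩ : ∃ n, k = n + 1 := ⟨k - 1, by omega⟩
    rw [← hβ, ← levelCard_congr _ _ h d, levelCard_fpow]
  have h2 : 2 ≤ levelCard R d := by
    by_contra hlt
    have : levelCard R d ^ k ≤ 1 ^ k := Nat.pow_le_pow_left (by omega) k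
    rw [one_pow] at this
    omega
  have h3 : 2 ^ k ≤ β := hs ▸ Nat.pow_le_pow_left h2 k
  have h4 : β ≤ m := by
    rw [hm, ← hβ]
    have hd : d ≤ fdepth A := le_fdepth A hA d (by omega)
    exact Finset.single_le_sum (f := fun d => levelCard A d) (fun _ _ => Nat.zero_le _)
      (Finset.mem_range.2 (by omega))
  exact ⟨⟨_, h2, hs⟩, h3, Nat.le_log_of_pow_le (by norm_num) (h3.trans h4)⟩
end
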